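/- Fix ν ≥ 2 and positive integers s,t, let f_{i,j} ∈ L¹([-π,π]; ℂ^{s×t}) for i,j = 1,…,ν, and let A_n be the ν×ν block matrix with (i,j) block T_{n_i,n_j}(f_{i,j}) where the block sizes satisfy n_j = n/ν + o(n) for j = 1,…,ν and n = n_1 + ⋯ + n_ν. Set F = (f_{i,j})_{i,j=1}^ν : [-π,π] → ℂ^{νs×νt}. Then {A_n}_n ∼_σ F, and if in addition F is Hermitian-valued then {A_n}_n ∼_λ F. -/

import Mathlib

open MeasureTheory Filter Topology Matrix
open scoped Real

noncomputable section

/-- Sum of `F` over the eigenvalues (with multiplicity) of a square complex matrix,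
the eigenvalues being the roots of the characteristic polynomial. -/
def eigSum {ι : Type*} [Fintype ι] [DecidableEq ι] (F : ℂ → ℂ) (A : Matrix ι ι ℂ) : ℂ :=
  (A.charpoly.roots.map F).sum

/-- Sum of `F` over the singular values `σ_1, …, σ_{min(#rows,#cols)}` of a rectangular
complex matrix: the singular values are the square roots of the eigenvalues of `A * Aᴴ`,
discarding the `#rows - min(#rows,#cols)` superfluous zero ones. -/
def svSum {m n : Type*} [Fintype m] [Fintype n] [DecidableEq m]
    (F : ℝ → ℂ) (A : Matrix m n ℂ) : ℂ :=
  (∑ i, F (Real.sqrt ((Matrix.isHermitian_mul_conjTranspose_self A).eigenvalues i))) -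
    ((Fintype.card m - min (Fintype.card m) (Fintype.card n) : ℕ) : ℂ) * F 0

/-- `{A_n}_n ∼_σ f` : the matrix-sequence `A` is distributed as the matrix-valued
symbol `f : Ω → ℂ^{ρ×τ}` in the sense of the singular values (Weyl sense). -/
def DistributedSV {Θ : Type*} [MeasureSpace Θ] (Ω : Set Θ)
    {ρ τ : Type*} [Fintype ρ] [Fintype τ] [DecidableEq ρ]
    (f : Θ → Matrix ρ τ ℂ)
    {ι κ : ℕ → Type} [∀ n, Fintype (ι n)] [∀ n, Fintype (κ n)] [∀ n, DecidableEq (ι n)]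
    (A : ∀ n, Matrix (ι n) (κ n) ℂ) : Prop :=
  ∀ F : ℝ → ℂ, Continuous F → HasCompactSupport F →
    Tendsto
      (fun n => ((min (Fintype.card (ι n)) (Fintype.card (κ n)) : ℕ) : ℂ)⁻¹ * svSum F (A n))
      atTop
      (𝓝 (((volume Ω).toReal : ℂ)⁻¹ *
        ∫ θ in Ω, ((min (Fintype.card ρ) (Fintype.card τ) : ℕ) : ℂ)⁻¹ * svSum F (f θ)))

/-- `{A_n}_n ∼_λ f` : the matrix-sequence `A` is distributed as the matrix-valued
symbol `f : Ω → ℂ^{ρ×ρ}` in the sense of the eigenvalues (Weyl sense). -/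
def DistributedEig {Θ : Type*} [MeasureSpace Θ] (Ω : Set Θ)
    {ρ : Type*} [Fintype ρ] [DecidableEq ρ]
    (f : Θ → Matrix ρ ρ ℂ)
    {ι : ℕ → Type} [∀ n, Fintype (ι n)] [∀ n, DecidableEq (ι n)]
    (A : ∀ n, Matrix (ι n) (ι n) ℂ) : Prop :=
  ∀ F : ℂ → ℂ, Continuous F → HasCompactSupport F →
    Tendsto (fun n => ((Fintype.card (ι n) : ℕ) : ℂ)⁻¹ * eigSum F (A n)) atTop
      (𝓝 (((volume Ω).toReal : ℂ)⁻¹ *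
        ∫ θ in Ω, ((Fintype.card ρ : ℕ) : ℂ)⁻¹ * eigSum F (f θ)))

/-- `{A_n}_n ∼_σ α I` (constant symbol `α I_s`, `α = 0` being the notion of a
zero-distributed matrix-sequence): the limit of the singular value averages is `F(α)`. -/
def DistributedSVConst (α : ℝ)
    {ι κ : ℕ → Type} [∀ n, Fintype (ι n)] [∀ n, Fintype (κ n)] [∀ n, DecidableEq (ι n)]
    (A : ∀ n, Matrix (ι n) (κ n) ℂ) : Prop :=
  ∀ F : ℝ → ℂ, Continuous F → HasCompactSupport F →
    Tendsto
      (fun n => ((min (Fintype.card (ι n)) (Fintype.card (κ n)) : ℕ) : ℂ)⁻¹ * svSum F (A n))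
      atTop (𝓝 (F α))

/-- `{A_n}_n ∼_λ α I` (constant symbol `α I_s`, `α` real): the limit of the eigenvalue
averages is `F(α)`. -/
def DistributedEigConst (α : ℝ)
    {ι : ℕ → Type} [∀ n, Fintype (ι n)] [∀ n, DecidableEq (ι n)]
    (A : ∀ n, Matrix (ι n) (ι n) ℂ) : Prop :=
  ∀ F : ℂ → ℂ, Continuous F → HasCompactSupport F →
    Tendsto (fun n => ((Fintype.card (ι n) : ℕ) : ℂ)⁻¹ * eigSum F (A n)) atTop
      (𝓝 (F (α : ℂ)))

/-- The `k`-th Fourier coefficient (computed entrywise) of a matrix-valued function on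
`[-π, π]`: `f̂_k = (1/2π) ∫_{-π}^{π} f(θ) e^{-ικθ} dθ`. -/
def fCoeff {ρ τ : Type*} (f : ℝ → Matrix ρ τ ℂ) (k : ℤ) : Matrix ρ τ ℂ :=
  Matrix.of fun a b =>
    ((2 * π : ℝ) : ℂ)⁻¹ *
      ∫ θ in (-π : ℝ)..π, f θ a b * Complex.exp (-(Complex.I * (k : ℂ) * (θ : ℂ)))

/-- The (rectangular) block Toeplitz matrix `T_{n,n'}(f) = [f̂_{i-j}]`, of size
`sn × tn'` when `f` is `s × t` matrix-valued. -/
def blockToeplitz {ρ τ : Type*} (f : ℝ → Matrix ρ τ ℂ) (n n' : ℕ) :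
    Matrix (Fin n × ρ) (Fin n' × τ) ℂ :=
  Matrix.of fun p q => fCoeff f (((p.1 : ℕ) : ℤ) - ((q.1 : ℕ) : ℤ)) p.2 q.2

/-- The `ν × ν` block matrix with `(i,j)` block the rectangular block Toeplitz matrix
`T_{n_i,n_j}(f_{i,j})`; the row index `⟨i,(k,a)⟩` consists of the block row `i`, the
Toeplitz row `k` and the intra-block row `a`. -/
def blockMat (ν s t : ℕ) (f : Fin ν → Fin ν → ℝ → Matrix (Fin s) (Fin t) ℂ)
    (ns : Fin ν → ℕ) :
    Matrix ((i : Fin ν) × (Fin (ns i) × Fin s)) ((j : Fin ν) × (Fin (ns j) × Fin t)) ℂ :=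
  Matrix.of fun P Q =>
    fCoeff (f P.1 Q.1) (((P.2.1 : ℕ) : ℤ) - ((Q.2.1 : ℕ) : ℤ)) P.2.2 Q.2.2

/-- Recasting of the column index of a `ν × ν` block matrix along an equality `s = t`,
realizing it as a square matrix. -/
def sigCast (ν s t : ℕ) (ns : Fin ν → ℕ) (hst : s = t) :
    ((j : Fin ν) × (Fin (ns j) × Fin s)) → ((j : Fin ν) × (Fin (ns j) × Fin t)) :=
  fun Q => ⟨Q.1, (Q.2.1, Fin.cast hst Q.2.2)⟩

/-- The `νs × νt` matrix-valued symbol `F = (f_{i,j})_{i,j=1}^ν`. -/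
def blockSymbol (ν s t : ℕ) (f : Fin ν → Fin ν → ℝ → Matrix (Fin s) (Fin t) ℂ) :
    ℝ → Matrix (Fin ν × Fin s) (Fin ν × Fin t) ℂ :=
  fun θ => Matrix.of fun p q => f p.1 q.1 θ p.2 q.2

/-!
After a permutation of rows and columns, the matrix becomes `multiToeplitz F m m`, made of scalar
Toeplitz blocks attached to the entries of the symbol `F`, and singular values reduce to eigenvalues
through the Hermitian dilation `[[0, A], [Aᴴ, 0]]`. For a Hermitian symbol, the functions
`x ↦ (z - x)⁻¹` with `z` non-real and the constants span a dense subspace of `C(OnePoint ℝ, ℂ)`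
by Stone–Weierstrass, so only traces of resolvents have to be studied. They depend on the
symbol in a Lipschitz way for the `L¹` norm, which reduces the problem to trigonometric polynomials
`P`. In that case `z - T(P)` times `T((z - P)⁻¹)` differs from the identity only in `o(n)` rows,
those near the end of a block or beyond the length of another one, hence by a matrix of trace norm
`o(n)`, and the normalised trace of `T((z - P)⁻¹)` tends to the mean of the trace of `(z - P)⁻¹`.
-/

lemma tendsto_of_forall_approx {α E : Type*} [SeminormedAddCommGroup E] {𝓁 : Filter α}
    {u : α → E} {a : E}
    (h : ∀ ε > 0, ∃ v : α → E, ∃ b : E,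
      Tendsto v 𝓁 (𝓝 b) ∧ (∀ᶠ n in 𝓁, ‖u n - v n‖ ≤ ε) ∧ ‖a - b‖ ≤ ε) :
    Tendsto u 𝓁 (𝓝 a) := by
  refine Metric.tendsto_nhds.mpr fun ε hε => ?_
  obtain ⟨v, b, hv, huv, hab⟩ := h (ε / 3) (by positivity)
  filter_upwards [huv, Metric.tendsto_nhds.mp hv (ε / 3) (by positivity)] with n hun hvn
  rw [← dist_eq_norm] at hun hab
  linarith [dist_triangle4 (u n) (v n) b a, dist_comm a b]

section Resolvents

lemma sub_ofReal_ne_zero {z : ℂ} (hz : z.im ≠ 0) (x : ℝ) : z - x ≠ 0 := fun h =>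
  hz (by simpa using congrArg Complex.im h)

lemma norm_inv_sub_ofReal_le {z : ℂ} (hz : z.im ≠ 0) (x : ℝ) : ‖(z - x)⁻¹‖ ≤ |z.im|⁻¹ := by
  rw [norm_inv]
  refine inv_anti₀ (abs_pos.mpr hz) ?_
  simpa using Complex.abs_im_le_norm (z - x)

/-- The function `x ↦ (z - x)⁻¹` on the real line, extended by `0` to `OnePoint ℝ`. -/
def resolventFun (z : ℂ) (hz : z.im ≠ 0) : C(OnePoint ℝ, ℂ) :=
  OnePoint.continuousMapMk
    ⟨fun x : ℝ => (z - x)⁻¹,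
      (continuous_const.sub Complex.continuous_ofReal).inv₀ (sub_ofReal_ne_zero hz)⟩ 0 (by
    rw [coclosedCompact_eq_cocompact, ← Metric.cobounded_eq_cocompact]
    refine tendsto_inv₀_cobounded.comp (tendsto_norm_atTop_iff_cobounded.mp ?_)
    refine tendsto_atTop_mono (fun x : ℝ => ?_)
      (tendsto_atTop_add_const_right _ (-‖z‖) tendsto_norm_cobounded_atTop)
    simpa [norm_sub_rev z] using norm_sub_norm_le (x : ℂ) z)

@[simp] lemma resolventFun_coe (z : ℂ) (hz : z.im ≠ 0) (x : ℝ) :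
    resolventFun z hz (x : OnePoint ℝ) = (z - x)⁻¹ := rfl

@[simp] lemma resolventFun_infty (z : ℂ) (hz : z.im ≠ 0) :
    resolventFun z hz OnePoint.infty = 0 := rfl

lemma norm_resolventFun_le (z : ℂ) (hz : z.im ≠ 0) : ‖resolventFun z hz‖ ≤ |z.im|⁻¹ := by
  refine (ContinuousMap.norm_le _ (by positivity)).mpr fun x => ?_
  induction x using OnePoint.rec with
  | infty => simp
  | coe x => exact norm_inv_sub_ofReal_le hz x

lemma resolventFun_sub_resolventFun {z w : ℂ} (hz : z.im ≠ 0) (hw : w.im ≠ 0) :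
    resolventFun z hz - resolventFun w hw = (w - z) • (resolventFun z hz * resolventFun w hw) := by
  ext x
  induction x using OnePoint.rec with
  | infty => simp
  | coe x =>
    have hzx := sub_ofReal_ne_zero hz x
    have hwx := sub_ofReal_ne_zero hw x
    simp only [ContinuousMap.sub_apply, ContinuousMap.smul_apply, ContinuousMap.mul_apply,
      resolventFun_coe, smul_eq_mul]
    field_simp
    ring

lemma star_resolventFun (z : ℂ) (hz : z.im ≠ 0) :
    star (resolventFun z hz) = resolventFun (star z) (by simpa using hz) := by
  ext x
  induction x using OnePoint.rec with
  | infty => simp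
  | coe x => simp

lemma resolventFun_injective (z : ℂ) (hz : z.im ≠ 0) : Function.Injective (resolventFun z hz) := by
  intro x y hxy
  induction x using OnePoint.rec <;> induction y using OnePoint.rec <;>
    simp_all [sub_ofReal_ne_zero, eq_comm]

/-- The closed linear span of the constants and the functions `resolventFun z hz`. -/
def resolventSpan : Submodule ℂ C(OnePoint ℝ, ℂ) :=
  (Submodule.span ℂ ({1} ∪ {g | ∃ z hz, g = resolventFun z hz})).topologicalClosure

lemma one_mem_resolventSpan : 1 ∈ resolventSpan :=
  Submodule.le_topologicalClosure _ (Submodule.subset_span (Or.inl rfl))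

lemma resolventFun_mem_resolventSpan (z : ℂ) (hz : z.im ≠ 0) :
    resolventFun z hz ∈ resolventSpan :=
  Submodule.le_topologicalClosure _ (Submodule.subset_span (Or.inr ⟨z, hz, rfl⟩))

lemma isClosed_resolventSpan : IsClosed (resolventSpan : Set C(OnePoint ℝ, ℂ)) :=
  Submodule.isClosed_topologicalClosure _

lemma resolventFun_mul_mem_resolventSpan_of_ne {z w : ℂ} (hz : z.im ≠ 0) (hw : w.im ≠ 0)
    (hzw : z ≠ w) : resolventFun z hz * resolventFun w hw ∈ resolventSpan := by
  rw [← inv_smul_smul₀ (sub_ne_zero.mpr hzw.symm) (resolventFun z hz * resolventFun w hw),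
    ← resolventFun_sub_resolventFun]
  exact resolventSpan.smul_mem _ (resolventSpan.sub_mem (resolventFun_mem_resolventSpan z hz)
    (resolventFun_mem_resolventSpan w hw))

lemma tendsto_resolventFun_add_ofReal (z : ℂ) (hz : z.im ≠ 0) :
    Tendsto (fun t : ℝ => resolventFun (z + t) (by simpa using hz)) (𝓝 0)
      (𝓝 (resolventFun z hz)) := by
  refine tendsto_iff_norm_sub_tendsto_zero.mpr (squeeze_zero (fun _ => norm_nonneg _)
    (g := fun t : ℝ => |t| * (|z.im|⁻¹ * |z.im|⁻¹)) (fun t => ?_) ?_)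
  · rw [resolventFun_sub_resolventFun, norm_smul]
    have h := norm_resolventFun_le (z + t) (by simpa using hz)
    simp only [Complex.add_im, Complex.ofReal_im, add_zero] at h
    refine mul_le_mul (by simp) ((norm_mul_le _ _).trans ?_) (norm_nonneg _) (abs_nonneg _)
    exact mul_le_mul h (norm_resolventFun_le z hz) (norm_nonneg _) (by positivity)
  · exact Continuous.tendsto' (by fun_prop) _ _ (by simp)

lemma resolventFun_mul_mem_resolventSpan {z w : ℂ} (hz : z.im ≠ 0) (hw : w.im ≠ 0) :
    resolventFun z hz * resolventFun w hw ∈ resolventSpan := by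
  rcases ne_or_eq z w with hzw | rfl
  · exact resolventFun_mul_mem_resolventSpan_of_ne hz hw hzw
  · refine isClosed_resolventSpan.mem_of_tendsto
      (((tendsto_resolventFun_add_ofReal z hz).mono_left nhdsWithin_le_nhds).const_mul
        (resolventFun z hz)) (b := 𝓝[≠] 0) ?_
    filter_upwards [self_mem_nhdsWithin] with t ht
    exact resolventFun_mul_mem_resolventSpan_of_ne _ _ (by simpa using ht)

lemma mul_mem_resolventSpan {g h : C(OnePoint ℝ, ℂ)} (hg : g ∈ resolventSpan)
    (hh : h ∈ resolventSpan) : g * h ∈ resolventSpan := by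
  have hgen : ∀ a ∈ Submodule.span ℂ ({1} ∪ {g | ∃ z hz, g = resolventFun z hz}),
      ∀ b ∈ Submodule.span ℂ ({1} ∪ {g | ∃ z hz, g = resolventFun z hz}),
        a * b ∈ resolventSpan := by
    rw [← Submodule.mul_le, Submodule.span_mul_span, Submodule.span_le]
    rintro _ ⟨_, rfl | ⟨z, hz, rfl⟩, b, rfl | ⟨w, hw, rfl⟩, rfl⟩
    · simpa using one_mem_resolventSpan
    · simpa using resolventFun_mem_resolventSpan w hw
    · simpa using resolventFun_mem_resolventSpan z hz
    · exact resolventFun_mul_mem_resolventSpan hz hw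
  have := map_mem_closure₂ continuous_mul hg hh hgen
  rwa [isClosed_resolventSpan.closure_eq] at this

lemma star_mem_resolventSpan {g : C(OnePoint ℝ, ℂ)} (hg : g ∈ resolventSpan) :
    star g ∈ resolventSpan := by
  have hgen : ∀ a ∈ Submodule.span ℂ ({1} ∪ {g | ∃ z hz, g = resolventFun z hz}),
      star a ∈ resolventSpan := by
    intro a ha
    induction ha using Submodule.span_induction with
    | mem x hx =>
      rcases hx with rfl | ⟨z, hz, rfl⟩
      · simpa using one_mem_resolventSpan
      · exact star_resolventFun z hz ▸ resolventFun_mem_resolventSpan _ _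
    | zero => simp
    | add x y _ _ hx hy => simpa using resolventSpan.add_mem hx hy
    | smul c x _ hx => simpa using resolventSpan.smul_mem (star c) hx
  have := map_mem_closure continuous_star hg hgen
  rwa [isClosed_resolventSpan.closure_eq] at this

theorem resolventSpan_eq_top : resolventSpan = ⊤ := by
  let A : StarSubalgebra ℂ C(OnePoint ℝ, ℂ) :=
    { resolventSpan.toSubalgebra one_mem_resolventSpan fun _ _ => mul_mem_resolventSpan with
      star_mem' := star_mem_resolventSpan }
  have hsep : A.SeparatesPoints := fun x y hxy =>
    ⟨_, ⟨_, resolventFun_mem_resolventSpan Complex.I (by simp), rfl⟩,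
      (resolventFun_injective Complex.I (by simp)).ne hxy⟩
  have htop := ContinuousMap.starSubalgebra_topologicalClosure_eq_top_of_separatesPoints A hsep
  refine (Submodule.eq_top_iff').mpr fun g => ?_
  have hg : g ∈ closure (resolventSpan : Set C(OnePoint ℝ, ℂ)) :=
    (htop ▸ trivial : g ∈ A.topologicalClosure)
  rwa [isClosed_resolventSpan.closure_eq] at hg

theorem eq_top_of_isClosed_of_resolventFun_mem {W : Submodule ℂ C(OnePoint ℝ, ℂ)}
    (hW : IsClosed (W : Set C(OnePoint ℝ, ℂ))) (h_one : 1 ∈ W)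
    (h_res : ∀ z hz, resolventFun z hz ∈ W) : W = ⊤ := by
  rw [eq_top_iff, ← resolventSpan_eq_top]
  refine Submodule.topologicalClosure_minimal _ (Submodule.span_le.mpr ?_) hW
  rintro g (rfl | ⟨z, hz, rfl⟩)
  exacts [h_one, h_res z hz]

end Resolvents

section Hermitian

open scoped Matrix.Norms.L2Operator

variable {ι κ : Type*} [Fintype ι] [DecidableEq ι] [Fintype κ] [DecidableEq κ]

lemma eigSum_add (F G : ℂ → ℂ) (A : Matrix ι ι ℂ) :
    eigSum (fun w => F w + G w) A = eigSum F A + eigSum G A :=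
  Multiset.sum_map_add

lemma eigSum_const_mul (c : ℂ) (F : ℂ → ℂ) (A : Matrix ι ι ℂ) :
    eigSum (fun w => c * F w) A = c * eigSum F A :=
  Multiset.sum_map_mul_left

lemma eigSum_const (c : ℂ) (A : Matrix ι ι ℂ) :
    eigSum (fun _ => c) A = Fintype.card ι * c := by
  rw [eigSum, Multiset.map_const', Multiset.sum_replicate, IsAlgClosed.card_roots_eq_natDegree,
    charpoly_natDegree_eq_dim, nsmul_eq_mul]

lemma eigSum_reindex (e : ι ≃ κ) (F : ℂ → ℂ) (A : Matrix ι ι ℂ) :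
    eigSum F (A.reindex e e) = eigSum F A := by
  rw [eigSum, charpoly_reindex, eigSum]

lemma eigSum_conjStarAlgAut_diagonal (U : unitaryGroup ι ℂ) (F : ℂ → ℂ) (v : ι → ℂ) :
    eigSum F (Unitary.conjStarAlgAut ℂ _ U (diagonal v)) = ∑ i, F (v i) := by
  have hroots : (diagonal v).charpoly.roots = Finset.univ.val.map v := by
    rw [charpoly_diagonal, Finset.prod_eq_multiset_prod,
      ← Function.comp_def (fun x => Polynomial.X - Polynomial.C x) v, ← Multiset.map_map,
      Polynomial.roots_multiset_prod_X_sub_C]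
  rw [eigSum, Unitary.conjStarAlgAut_apply, mul_assoc, charpoly_mul_comm, mul_assoc,
    Unitary.coe_star_mul_self, mul_one, hroots, Multiset.map_map]
  rfl

lemma eigSum_of_isHermitian {A : Matrix ι ι ℂ} (hA : A.IsHermitian) (F : ℂ → ℂ) :
    eigSum F A = ∑ i, F (hA.eigenvalues i) := by
  conv_lhs => rw [hA.spectral_theorem, eigSum_conjStarAlgAut_diagonal]
  rfl

lemma norm_eigSum_le {A : Matrix ι ι ℂ} (hA : A.IsHermitian) {F : ℂ → ℂ} {C : ℝ}
    (hF : ∀ x : ℝ, ‖F x‖ ≤ C) :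
    ‖eigSum F A‖ ≤ Fintype.card ι * C := by
  rw [eigSum_of_isHermitian hA]
  exact (norm_sum_le_of_le _ fun i _ => hF _).trans_eq (by simp)

lemma eigSum_mul_self {A : Matrix ι ι ℂ} (hA : A.IsHermitian) (F : ℂ → ℂ) :
    eigSum F (A * A) = eigSum (fun w => F (w * w)) A := by
  conv_lhs => rw [hA.spectral_theorem, ← map_mul, diagonal_mul_diagonal,
    eigSum_conjStarAlgAut_diagonal]
  rw [eigSum_of_isHermitian hA]
  rfl

variable {A B : Matrix ι ι ℂ} {z : ℂ}

lemma mem_resolventSet_of_im_ne_zero (hA : A.IsHermitian) (hz : z.im ≠ 0) :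
    z ∈ resolventSet ℂ A := by
  by_contra h
  exact hz (IsSelfAdjoint.im_eq_zero_of_mem_spectrum hA h)

lemma resolvent_eq_conjStarAlgAut (hA : A.IsHermitian) (hz : z.im ≠ 0) :
    resolvent A z = Unitary.conjStarAlgAut ℂ _ hA.eigenvectorUnitary
      (diagonal fun i => (z - hA.eigenvalues i)⁻¹) := by
  set Φ := Unitary.conjStarAlgAut ℂ _ hA.eigenvectorUnitary
  have hΦ : algebraMap ℂ _ z - A = Φ (diagonal fun i => z - (hA.eigenvalues i : ℂ)) := by
    conv_lhs => rw [hA.spectral_theorem, ← AlgHomClass.commutes Φ, ← map_sub,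
      algebraMap_eq_diagonal, diagonal_sub]
    rfl
  have hinv : (algebraMap ℂ _ z - A) * Φ (diagonal fun i => (z - hA.eigenvalues i)⁻¹) = 1 := by
    rw [hΦ, ← map_mul, diagonal_mul_diagonal]
    simp [sub_ofReal_ne_zero hz]
  rw [resolvent, ← nonsing_inv_eq_ringInverse, inv_eq_right_inv hinv]

lemma norm_resolvent_le (hA : A.IsHermitian) (hz : z.im ≠ 0) : ‖resolvent A z‖ ≤ |z.im|⁻¹ := by
  rw [resolvent_eq_conjStarAlgAut hA hz, StarAlgEquiv.norm_map, l2_opNorm_diagonal,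
    pi_norm_le_iff_of_nonneg (by positivity)]
  exact fun i => norm_inv_sub_ofReal_le hz _

lemma trace_resolvent (hA : A.IsHermitian) (hz : z.im ≠ 0) :
    (resolvent A z).trace = eigSum (fun w => resolventFun z hz (w.re : OnePoint ℝ)) A := by
  rw [resolvent_eq_conjStarAlgAut hA hz, eigSum_of_isHermitian hA, Unitary.conjStarAlgAut_apply,
    trace_mul_cycle, Unitary.coe_star_mul_self, one_mul, trace_diagonal]
  rfl

lemma resolvent_sub_resolvent_of_isHermitian (hA : A.IsHermitian) (hB : B.IsHermitian)
    (hz : z.im ≠ 0) :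
    resolvent A z - resolvent B z = resolvent A z * (A - B) * resolvent B z :=
  spectrum.resolvent_sub_resolvent (mem_resolventSet_of_im_ne_zero hA hz)
    (mem_resolventSet_of_im_ne_zero hB hz)

end Hermitian

section TrigonometricPolynomials

/-- Lebesgue measure on the period interval `[-π, π]`. -/
abbrev periodMeasure : Measure ℝ := volume.restrict (Set.Icc (-π) π)

lemma measureReal_periodMeasure_univ : periodMeasure.real Set.univ = 2 * π := by
  rw [measureReal_restrict_apply_univ, Real.volume_real_Icc_of_le (by linarith [Real.pi_pos])]
  ring

/-- The exponential `θ ↦ e^{ιkθ}`. -/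
def expI (k : ℤ) (θ : ℝ) : ℂ := Complex.exp (Complex.I * k * θ)

@[fun_prop]
lemma continuous_expI (k : ℤ) : Continuous (expI k) := by
  unfold expI
  fun_prop

@[simp] lemma expI_zero (θ : ℝ) : expI 0 θ = 1 := by simp [expI]

lemma expI_add (k l : ℤ) (θ : ℝ) : expI (k + l) θ = expI k θ * expI l θ := by
  rw [expI, expI, expI, ← Complex.exp_add]
  push_cast
  ring_nf

@[simp] lemma star_expI (k : ℤ) (θ : ℝ) : star (expI k θ) = expI (-k) θ := by
  simp [expI, ← Complex.exp_conj]

@[simp] lemma norm_expI (k : ℤ) (θ : ℝ) : ‖expI k θ‖ = 1 := by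
  have : Complex.I * k * θ = ((k * θ : ℝ) : ℂ) * Complex.I := by
    push_cast
    ring
  rw [expI, this, Complex.norm_exp_ofReal_mul_I]

lemma fourier_two_pi_coe (k : ℤ) (θ : ℝ) :
    fourier k (θ : AddCircle (2 * π)) = expI k θ := by
  rw [fourier_coe_apply, expI]
  have : (π : ℂ) ≠ 0 := by exact_mod_cast Real.pi_ne_zero
  push_cast
  field_simp

/-- The trigonometric polynomials of degree at most `d`. -/
def trigPoly (d : ℕ) : Submodule ℂ (ℝ → ℂ) :=
  Submodule.span ℂ (expI '' {k | |k| ≤ d})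

lemma expI_mem_trigPoly {d : ℕ} {k : ℤ} (hk : |k| ≤ d) : expI k ∈ trigPoly d :=
  Submodule.subset_span ⟨k, hk, rfl⟩

lemma trigPoly_mono {d e : ℕ} (h : d ≤ e) : trigPoly d ≤ trigPoly e :=
  Submodule.span_mono <| Set.image_mono fun k (hk : |k| ≤ d) => hk.trans (by exact_mod_cast h)

lemma continuous_of_mem_trigPoly {d : ℕ} {p : ℝ → ℂ} (hp : p ∈ trigPoly d) : Continuous p := by
  induction hp using Submodule.span_induction with
  | mem x hx =>
    obtain ⟨k, -, rfl⟩ := hx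
    exact continuous_expI k
  | zero => exact continuous_zero
  | add x y _ _ hx hy => exact hx.add hy
  | smul c x _ hx => exact hx.const_smul c

lemma star_mem_trigPoly {d : ℕ} {p : ℝ → ℂ} (hp : p ∈ trigPoly d) : star p ∈ trigPoly d := by
  induction hp using Submodule.span_induction with
  | mem x hx =>
    obtain ⟨k, hk, rfl⟩ := hx
    have : star (expI k) = expI (-k) := funext (star_expI k)
    exact this ▸ expI_mem_trigPoly ((abs_neg k).trans_le hk)
  | zero => simp
  | add x y _ _ hx hy => simpa using (trigPoly d).add_mem hx hy
  | smul c x _ hx => simpa using (trigPoly d).smul_mem (star c) hx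

lemma exists_mem_trigPoly_of_mem_span_fourier {q : C(AddCircle (2 * π), ℂ)}
    (hq : q ∈ Submodule.span ℂ (Set.range (@fourier (2 * π)))) :
    ∃ d, (fun θ : ℝ => q θ) ∈ trigPoly d := by
  induction hq using Submodule.span_induction with
  | mem x hx =>
    obtain ⟨k, rfl⟩ := hx
    exact ⟨k.natAbs, (funext (fourier_two_pi_coe k) : _ = expI k) ▸
      expI_mem_trigPoly (Int.abs_eq_natAbs k).le⟩
  | zero => exact ⟨0, (trigPoly 0).zero_mem⟩
  | add x y _ _ hx hy =>
    obtain ⟨d, hd⟩ := hx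
    obtain ⟨e, he⟩ := hy
    exact ⟨max d e, (trigPoly _).add_mem (trigPoly_mono (le_max_left d e) hd)
      (trigPoly_mono (le_max_right d e) he)⟩
  | smul c x _ hx =>
    obtain ⟨d, hd⟩ := hx
    exact ⟨d, (trigPoly d).smul_mem c hd⟩

lemma exists_span_fourier_integral_norm_sub_le {T : ℝ} [Fact (0 < T)] {G : AddCircle T → ℂ}
    (hG : Integrable G) {ε : ℝ} (hε : 0 < ε) :
    ∃ q ∈ Submodule.span ℂ (Set.range (@fourier T)), ∫ t, ‖G t - q t‖ ≤ ε := by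
  have hT : 0 < T := Fact.out
  obtain ⟨h, hGh, hh⟩ := hG.exists_boundedContinuous_integral_sub_le (half_pos hε)
  have hmem : h.toContinuousMap ∈ closure (Submodule.span ℂ (Set.range (@fourier T)) : Set _) :=
    (span_fourier_closure_eq_top (T := T) ▸ Submodule.mem_top :
      h.toContinuousMap ∈ (Submodule.span ℂ (Set.range (@fourier T))).topologicalClosure)
  obtain ⟨q, hq, hhq⟩ := Metric.mem_closure_iff.mp hmem (ε / (2 * T)) (by positivity)
  have hq_int : Integrable q := q.continuous.integrable_of_hasCompactSupport (.of_compactSpace _)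
  have hGh_int : Integrable fun t => ‖G t - h t‖ := (hG.sub hh).norm
  refine ⟨q, hq, ?_⟩
  calc ∫ t, ‖G t - q t‖
      ≤ ∫ t, (‖G t - h t‖ + ε / (2 * T)) := by
        refine integral_mono (hG.sub hq_int).norm (hGh_int.add (integrable_const _))
          fun t => (norm_sub_le_norm_sub_add_norm_sub _ (h t) _).trans ?_
        gcongr
        rw [← dist_eq_norm]
        exact (ContinuousMap.dist_apply_le_dist t).trans hhq.le
    _ = (∫ t, ‖G t - h t‖) + ε / 2 := by
        rw [integral_add hGh_int (integrable_const _), integral_const, smul_eq_mul,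
          measureReal_def, AddCircle.measure_univ, ENNReal.toReal_ofReal hT.le]
        field_simp
    _ ≤ ε := by linarith

theorem exists_mem_trigPoly_integral_norm_sub_le {g : ℝ → ℂ} (hg : Integrable g periodMeasure)
    {ε : ℝ} (hε : 0 < ε) :
    ∃ d, ∃ p ∈ trigPoly d, ∫ θ, ‖g θ - p θ‖ ∂periodMeasure ≤ ε := by
  have hT : Fact (0 < 2 * π) := ⟨Real.two_pi_pos⟩
  have hend : -π + 2 * π = π := by ring
  have hmeas : periodMeasure = volume.restrict (Set.Ioc (-π) (-π + 2 * π)) := by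
    rw [hend, restrict_Ioc_eq_restrict_Icc]
  rw [hmeas] at hg ⊢
  have hG : Integrable (AddCircle.liftIoc (2 * π) (-π) g) :=
    memLp_one_iff_integrable.mp (memLp_one_iff_integrable.mpr hg).memLp_liftIoc
  obtain ⟨q, hq, hGq⟩ := exists_span_fourier_integral_norm_sub_le hG hε
  obtain ⟨d, hd⟩ := exists_mem_trigPoly_of_mem_span_fourier hq
  refine ⟨d, _, hd, le_of_eq_of_le ?_ hGq⟩
  rw [← AddCircle.integral_preimage (2 * π) (-π)]
  refine setIntegral_congr_fun measurableSet_Ioc fun θ hθ => ?_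
  simp only [AddCircle.liftIoc_coe_apply hθ]

end TrigonometricPolynomials

section FourierCoefficients

/-- The `k`-th Fourier coefficient of a scalar function on `[-π, π]`. -/
def expCoeff (g : ℝ → ℂ) (k : ℤ) : ℂ :=
  (2 * π : ℂ)⁻¹ * ∫ θ, g θ * expI (-k) θ ∂periodMeasure

lemma integral_periodMeasure (g : ℝ → ℂ) :
    ∫ θ, g θ ∂periodMeasure = ∫ θ in (-π)..π, g θ := by
  rw [intervalIntegral.integral_of_le (neg_le_self Real.pi_pos.le), restrict_Ioc_eq_restrict_Icc]

lemma fCoeff_apply {ρ τ : Type*} (G : ℝ → Matrix ρ τ ℂ) (k : ℤ) (a : ρ) (b : τ) :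
    fCoeff G k a b = expCoeff (fun θ => G θ a b) k := by
  simp only [fCoeff, of_apply, expCoeff, expI, integral_periodMeasure]
  push_cast
  ring_nf

lemma integrable_mul_expI {g : ℝ → ℂ} (hg : Integrable g periodMeasure) (k : ℤ) :
    Integrable (fun θ => g θ * expI k θ) periodMeasure :=
  hg.mul_bdd (c := 1) (continuous_expI k).aestronglyMeasurable
    (Eventually.of_forall fun θ => (norm_expI k θ).le)

lemma expCoeff_add {g h : ℝ → ℂ} (hg : Integrable g periodMeasure)
    (hh : Integrable h periodMeasure) (k : ℤ) :
    expCoeff (g + h) k = expCoeff g k + expCoeff h k := by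
  simp only [expCoeff, Pi.add_apply, add_mul]
  rw [integral_add (integrable_mul_expI hg _) (integrable_mul_expI hh _), mul_add]

lemma expCoeff_smul (c : ℂ) (g : ℝ → ℂ) (k : ℤ) : expCoeff (c • g) k = c * expCoeff g k := by
  simp only [expCoeff, Pi.smul_apply, smul_eq_mul, mul_assoc, integral_const_mul]
  ring

lemma star_expCoeff (g : ℝ → ℂ) (k : ℤ) : star (expCoeff g k) = expCoeff (star g) (-k) := by
  simp only [expCoeff, star_mul', ← star_expI (-k), Pi.star_apply, Complex.star_def]
  rw [← integral_conj]
  simp [Complex.conj_ofNat]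

lemma integral_expI (k : ℤ) : ∫ θ, expI k θ ∂periodMeasure = if k = 0 then 2 * π else 0 := by
  rw [integral_periodMeasure]
  split_ifs with hk
  · simp [hk, two_mul]
  · have hIk : Complex.I * (k : ℂ) ≠ 0 := mul_ne_zero Complex.I_ne_zero (by exact_mod_cast hk)
    have hper : Complex.exp (Complex.I * k * (-π : ℝ)) = Complex.exp (Complex.I * k * π) :=
      Complex.exp_eq_exp_iff_exists_int.mpr ⟨-k, by push_cast; ring⟩
    simp only [expI]
    rw [integral_exp_mul_complex hIk, hper, sub_self, zero_div, Complex.ofReal_zero]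

lemma expCoeff_expI (j k : ℤ) : expCoeff (expI j) k = if j = k then 1 else 0 := by
  have hπ : (2 * π : ℂ) ≠ 0 := by exact_mod_cast Real.two_pi_pos.ne'
  simp only [expCoeff, ← expI_add, integral_expI, ← sub_eq_add_neg, sub_eq_zero]
  split_ifs
  · simpa using inv_mul_cancel₀ hπ
  · simp

lemma integrable_of_mem_trigPoly {d : ℕ} {p : ℝ → ℂ} (hp : p ∈ trigPoly d) :
    Integrable p periodMeasure :=
  (continuous_of_mem_trigPoly hp).integrableOn_Icc

theorem sum_expCoeff_mul_expI {d : ℕ} {p : ℝ → ℂ} (hp : p ∈ trigPoly d) {i M : ℕ}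
    (hi : d ≤ i) (hiM : i + d < M) (θ : ℝ) :
    ∑ j : Fin M, expCoeff p (i - j) * expI (-j) θ = expI (-i) θ * p θ := by
  induction hp using Submodule.span_induction with
  | mem x hx =>
    obtain ⟨k, hk, rfl⟩ := hx
    obtain ⟨hk₁, hk₂⟩ := abs_le.mp (show |k| ≤ d from hk)
    have hj (j : Fin M) : k = i - j ↔ (⟨(i - k).toNat, by omega⟩ : Fin M) = j := by
      rw [Fin.ext_iff]
      dsimp only
      omega
    simp only [expCoeff_expI, hj, ite_mul, one_mul, zero_mul, Finset.sum_ite_eq, Finset.mem_univ,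
      if_true]
    rw [← expI_add, Int.toNat_of_nonneg (by omega)]
    ring_nf
  | zero => simp [expCoeff]
  | add x y hx hy hx' hy' =>
    simp only [expCoeff_add (integrable_of_mem_trigPoly hx) (integrable_of_mem_trigPoly hy),
      add_mul, Finset.sum_add_distrib, hx', hy', Pi.add_apply, mul_add]
  | smul c x hx hx' =>
    simp only [expCoeff_smul, mul_assoc, ← Finset.mul_sum, hx', Pi.smul_apply, smul_eq_mul]
    ring

end FourierCoefficients

section MultiToeplitz

open scoped Matrix.Norms.L2Operator

/-- The block matrix whose block in block row `a` and block column `b` is the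
`m a × m' b` scalar Toeplitz matrix generated by the entry `G · a b` of the symbol. -/
def multiToeplitz {L L' : Type*} (G : ℝ → Matrix L L' ℂ) (m : L → ℕ) (m' : L' → ℕ) :
    Matrix ((a : L) × Fin (m a)) ((b : L') × Fin (m' b)) ℂ :=
  of fun p q => fCoeff G ((p.2 : ℤ) - (q.2 : ℤ)) p.1 q.1

/-- The matrix of exponentials such that `multiToeplitz G m m'` is the mean over `[-π, π]` of
`(expRow m θ)ᴴ * G θ * expRow m' θ`: its block column `a` has the entries `e^{ιkθ}`, `k < m a`, in
row `a` and zeros elsewhere. -/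
def expRow {L : Type*} [DecidableEq L] (m : L → ℕ) (θ : ℝ) : Matrix L ((a : L) × Fin (m a)) ℂ :=
  of fun a p => if p.1 = a then expI p.2 θ else 0

/-- The sum of the absolute values of the entries of a matrix. -/
def entrySum {ι κ : Type*} [Fintype ι] [Fintype κ] (D : Matrix ι κ ℂ) : ℝ :=
  ∑ a, ∑ b, ‖D a b‖

lemma conjTranspose_expRow_apply {L : Type*} [DecidableEq L] {m : L → ℕ} (θ : ℝ)
    (p : (a : L) × Fin (m a)) (a : L) :
    (expRow m θ)ᴴ p a = if p.1 = a then expI (-p.2) θ else 0 := by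
  rw [conjTranspose_apply, expRow, of_apply, apply_ite star, star_expI, star_zero]

lemma conjTranspose_expRow_mul_apply {L L' : Type*} [Fintype L] [DecidableEq L] {m : L → ℕ}
    (H : Matrix L L' ℂ) (θ : ℝ) (p : (a : L) × Fin (m a)) (b : L') :
    ((expRow m θ)ᴴ * H) p b = expI (-p.2) θ * H p.1 b := by
  simp only [mul_apply, conjTranspose_expRow_apply, ite_mul, zero_mul, Finset.sum_ite_eq,
    Finset.mem_univ, if_true]

variable {L L' : Type*} [Fintype L] [DecidableEq L] [Fintype L'] [DecidableEq L']
  {m : L → ℕ} {m' : L' → ℕ}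

lemma entrySum_nonneg {ι κ : Type*} [Fintype ι] [Fintype κ] (D : Matrix ι κ ℂ) : 0 ≤ entrySum D :=
  Finset.sum_nonneg fun _ _ => Finset.sum_nonneg fun _ _ => norm_nonneg _

lemma integrable_entrySum {L L' : Type*} [Fintype L] [Fintype L'] {D : ℝ → Matrix L L' ℂ}
    (hD : ∀ a b, Integrable (fun θ => D θ a b) periodMeasure) :
    Integrable (fun θ => entrySum (D θ)) periodMeasure :=
  integrable_finsetSum _ fun a _ => integrable_finsetSum _ fun b _ => (hD a b).norm

lemma norm_apply_le_l2_opNorm {ι κ : Type*} [Fintype ι] [Fintype κ] [DecidableEq κ]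
    (X : Matrix ι κ ℂ) (i : ι) (j : κ) : ‖X i j‖ ≤ ‖X‖ := by
  have hcol := l2_opNorm_mulVec X (EuclideanSpace.single j 1)
  rw [PiLp.norm_single, norm_one, mul_one] at hcol
  refine le_trans (le_of_eq ?_) ((PiLp.norm_apply_le _ i).trans hcol)
  simp [PiLp.ofLp_single]

lemma norm_trace_mul_le {ι : Type*} [Fintype ι] [DecidableEq ι] (X D : Matrix ι ι ℂ) :
    ‖(X * D).trace‖ ≤ ‖X‖ * entrySum D := by
  simp only [trace, diag_apply, mul_apply, entrySum, Finset.mul_sum]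
  rw [Finset.sum_comm]
  refine norm_sum_le_of_le _ fun a _ => norm_sum_le_of_le _ fun b _ => ?_
  rw [norm_mul]
  exact mul_le_mul_of_nonneg_right (norm_apply_le_l2_opNorm X b a) (norm_nonneg _)

lemma conjTranspose_expRow_mul_mul_expRow_apply (H : Matrix L L' ℂ) (θ : ℝ)
    (p : (a : L) × Fin (m a)) (q : (b : L') × Fin (m' b)) :
    ((expRow m θ)ᴴ * H * expRow m' θ) p q = H p.1 q.1 * expI (-(p.2 - q.2)) θ := by
  rw [Matrix.mul_apply]
  simp only [conjTranspose_expRow_mul_apply]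
  simp only [expRow, of_apply, mul_ite, mul_zero, Finset.sum_ite_eq, Finset.mem_univ, if_true]
  rw [neg_sub, sub_eq_neg_add, expI_add]
  ring

lemma expRow_mul_conjTranspose (m : L → ℕ) (θ : ℝ) :
    expRow m θ * (expRow m θ)ᴴ = diagonal fun a => (m a : ℂ) := by
  ext a b
  simp only [mul_apply, Fintype.sum_sigma, conjTranspose_expRow_apply]
  rcases eq_or_ne a b with rfl | hab
  · simp [expRow, ← expI_add]
  · simp [expRow, hab, hab.symm]

lemma norm_expRow_mul_self_le {M : ℝ} (hM : 0 ≤ M) (hm : ∀ a, (m a : ℝ) ≤ M) (θ : ℝ) :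
    ‖expRow m θ‖ * ‖(expRow m θ)ᴴ‖ ≤ M := by
  rw [← l2_opNorm_conjTranspose (expRow m θ), ← l2_opNorm_conjTranspose_mul_self,
    conjTranspose_conjTranspose, expRow_mul_conjTranspose, l2_opNorm_diagonal,
    pi_norm_le_iff_of_nonneg hM]
  simpa using hm

lemma multiToeplitz_apply (G : ℝ → Matrix L L' ℂ) (p : (a : L) × Fin (m a))
    (q : (b : L') × Fin (m' b)) :
    multiToeplitz G m m' p q =
      (2 * π : ℂ)⁻¹ * ∫ θ, ((expRow m θ)ᴴ * G θ * expRow m' θ) p q ∂periodMeasure := by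
  simp only [multiToeplitz, of_apply, fCoeff_apply, expCoeff,
    conjTranspose_expRow_mul_mul_expRow_apply]

theorem map_multiToeplitz {G : ℝ → Matrix L L' ℂ}
    (hG : ∀ a b, Integrable (fun θ => G θ a b) periodMeasure)
    (ψ : Matrix ((a : L) × Fin (m a)) ((b : L') × Fin (m' b)) ℂ →ₗ[ℂ] ℂ) :
    Integrable (fun θ => ψ ((expRow m θ)ᴴ * G θ * expRow m' θ)) periodMeasure ∧
      ψ (multiToeplitz G m m') =
        (2 * π : ℂ)⁻¹ * ∫ θ, ψ ((expRow m θ)ᴴ * G θ * expRow m' θ) ∂periodMeasure := by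
  obtain ⟨c, hψ⟩ : ∃ c : _ → _ → ℂ, ∀ M, ψ M = ∑ p, ∑ q, M p q * c p q := by
    refine ⟨fun p q => ψ (single p q 1), fun M => ?_⟩
    conv_lhs => rw [matrix_eq_sum_single M, map_sum]
    refine Finset.sum_congr rfl fun p _ => (map_sum ψ _ _).trans ?_
    refine Finset.sum_congr rfl fun q _ => ?_
    rw [← smul_eq_mul, ← map_smul, smul_single, smul_eq_mul, mul_one]
  have hint (p q) : Integrable (fun θ => ((expRow m θ)ᴴ * G θ * expRow m' θ) p q * c p q)
      periodMeasure := by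
    simp only [conjTranspose_expRow_mul_mul_expRow_apply]
    exact (integrable_mul_expI (hG _ _) _).mul_const _
  simp only [hψ]
  refine ⟨integrable_finsetSum _ fun p _ => integrable_finsetSum _ fun q _ => hint p q, ?_⟩
  rw [integral_finsetSum _ fun p _ => integrable_finsetSum _ fun q _ => hint p q]
  rw [Finset.mul_sum]
  refine Finset.sum_congr rfl fun p _ => ?_
  rw [integral_finsetSum _ fun q _ => hint p q, Finset.mul_sum]
  simp only [integral_mul_const, multiToeplitz_apply, mul_assoc]

theorem norm_trace_mul_multiToeplitz_le {D : ℝ → Matrix L L ℂ}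
    (hD : ∀ a b, Integrable (fun θ => D θ a b) periodMeasure)
    (X : Matrix ((a : L) × Fin (m a)) ((a : L) × Fin (m a)) ℂ) {M : ℝ} (hM : 0 ≤ M)
    (hm : ∀ a, (m a : ℝ) ≤ M) :
    ‖(X * multiToeplitz D m m).trace‖ ≤
      (2 * π)⁻¹ * (‖X‖ * M * ∫ θ, entrySum (D θ) ∂periodMeasure) := by
  have hbound (θ) : ‖(X * ((expRow m θ)ᴴ * D θ * expRow m θ)).trace‖ ≤
      ‖X‖ * M * entrySum (D θ) := by
    have hcycle : (X * ((expRow m θ)ᴴ * D θ * expRow m θ)).trace =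
        ((expRow m θ * X * (expRow m θ)ᴴ) * D θ).trace := by
      rw [← Matrix.mul_assoc, trace_mul_comm]
      simp only [Matrix.mul_assoc]
    rw [hcycle]
    refine (norm_trace_mul_le _ _).trans (mul_le_mul_of_nonneg_right ?_ (entrySum_nonneg _))
    calc ‖expRow m θ * X * (expRow m θ)ᴴ‖
        ≤ ‖expRow m θ‖ * ‖X‖ * ‖(expRow m θ)ᴴ‖ :=
          (l2_opNorm_mul _ _).trans (by gcongr; exact l2_opNorm_mul _ _)
      _ = ‖X‖ * (‖expRow m θ‖ * ‖(expRow m θ)ᴴ‖) := by ring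
      _ ≤ ‖X‖ * M := by
          gcongr
          exact norm_expRow_mul_self_le hM hm θ
  have htr := (map_multiToeplitz hD (traceLinearMap _ ℂ ℂ ∘ₗ LinearMap.mulLeft ℂ X)).2
  simp only [LinearMap.comp_apply, LinearMap.mulLeft_apply, traceLinearMap_apply] at htr
  rw [htr, norm_mul, ← integral_const_mul]
  exact mul_le_mul (by simp [abs_of_pos Real.pi_pos]) (norm_integral_le_of_norm_le
    ((integrable_entrySum hD).const_mul _) (Eventually.of_forall hbound)) (norm_nonneg _)
    (by positivity)

end MultiToeplitz

section NormBound

open scoped Matrix.Norms.L2Operator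

lemma star_dotProduct_eq_inner {ι : Type*} [Fintype ι] (u v : ι → ℂ) :
    star u ⬝ᵥ v = inner ℂ (WithLp.toLp 2 u) (WithLp.toLp 2 v) := by
  rw [EuclideanSpace.inner_eq_star_dotProduct, dotProduct_comm]

lemma star_dotProduct_self_eq_norm_sq {ι : Type*} [Fintype ι] (u : ι → ℂ) :
    star u ⬝ᵥ u = ((‖WithLp.toLp 2 u‖ ^ 2 : ℝ) : ℂ) := by
  rw [star_dotProduct_eq_inner, inner_self_eq_norm_sq_to_K]
  simp

lemma norm_star_dotProduct_mulVec_le {ι κ : Type*} [Fintype ι] [Fintype κ] [DecidableEq κ]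
    (M : Matrix ι κ ℂ) (u : ι → ℂ) (v : κ → ℂ) :
    ‖star u ⬝ᵥ M *ᵥ v‖ ≤ ‖WithLp.toLp 2 u‖ * (‖M‖ * ‖WithLp.toLp 2 v‖) := by
  rw [star_dotProduct_eq_inner]
  refine (norm_inner_le_norm _ _).trans ?_
  gcongr
  exact l2_opNorm_mulVec M (WithLp.toLp 2 v)

lemma l2_opNorm_le_of_norm_dotProduct_le {ι κ : Type*} [Fintype ι] [Fintype κ] [DecidableEq κ]
    {M : Matrix ι κ ℂ} {C : ℝ} (hC : 0 ≤ C)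
    (h : ∀ u v, ‖WithLp.toLp 2 u‖ = 1 → ‖WithLp.toLp 2 v‖ = 1 → ‖star u ⬝ᵥ M *ᵥ v‖ ≤ C) :
    ‖M‖ ≤ C := by
  rw [l2_opNorm_def]
  refine ContinuousLinearMap.opNorm_le_of_re_inner_le (𝕜 := ℂ) hC fun x y hx hy => ?_
  refine (RCLike.re_le_norm _).trans (le_of_eq_of_le ?_ (h y.ofLp x.ofLp hy hx))
  rw [norm_inner_symm, star_dotProduct_eq_inner]
  rfl

lemma multiToeplitz_one {L : Type*} [DecidableEq L] (m : L → ℕ) :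
    multiToeplitz (fun _ => (1 : Matrix L L ℂ)) m m = 1 := by
  have hconst (c : ℂ) : (fun _ => c : ℝ → ℂ) = c • expI 0 := by
    ext
    simp
  ext ⟨a, i⟩ ⟨b, j⟩
  rw [multiToeplitz, of_apply, fCoeff_apply, hconst, expCoeff_smul, expCoeff_expI]
  rcases eq_or_ne a b with rfl | hab
  · simp [one_apply, Fin.ext_iff, sub_eq_zero, eq_comm]
  · simp [one_apply, hab]

variable {L L' : Type*} [Fintype L] [DecidableEq L] [Fintype L'] [DecidableEq L']
  {m : L → ℕ} {m' : L' → ℕ} {G : ℝ → Matrix L L' ℂ}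

lemma star_dotProduct_multiToeplitz_mulVec
    (hG : ∀ a b, Integrable (fun θ => G θ a b) periodMeasure)
    (u : ((a : L) × Fin (m a)) → ℂ) (v : ((b : L') × Fin (m' b)) → ℂ) :
    Integrable (fun θ => star (expRow m θ *ᵥ u) ⬝ᵥ G θ *ᵥ (expRow m' θ *ᵥ v)) periodMeasure ∧
      star u ⬝ᵥ multiToeplitz G m m' *ᵥ v =
        (2 * π : ℂ)⁻¹ * ∫ θ, star (expRow m θ *ᵥ u) ⬝ᵥ G θ *ᵥ (expRow m' θ *ᵥ v)
          ∂periodMeasure := by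
  have h := map_multiToeplitz (m := m) (m' := m') hG
    { toFun := fun M => star u ⬝ᵥ M *ᵥ v
      map_add' := fun M N => by rw [add_mulVec, dotProduct_add]
      map_smul' := fun c M => by rw [smul_mulVec, dotProduct_smul, RingHom.id_apply] }
  simpa only [LinearMap.coe_mk, AddHom.coe_mk, star_mulVec, ← dotProduct_mulVec, mulVec_mulVec,
    Matrix.mul_assoc] using h

lemma integral_norm_sq_expRow_mulVec (u : ((a : L) × Fin (m a)) → ℂ) :
    Integrable (fun θ => ‖WithLp.toLp 2 (expRow m θ *ᵥ u)‖ ^ 2) periodMeasure ∧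
      ∫ θ, ‖WithLp.toLp 2 (expRow m θ *ᵥ u)‖ ^ 2 ∂periodMeasure =
        2 * π * ‖WithLp.toLp 2 u‖ ^ 2 := by
  have hint (a b : L) : Integrable (fun _ => (1 : Matrix L L ℂ) a b) periodMeasure :=
    integrable_const _
  obtain ⟨h₁, h₂⟩ := star_dotProduct_multiToeplitz_mulVec hint u u
  simp only [multiToeplitz_one, one_mulVec, star_dotProduct_self_eq_norm_sq] at h₁ h₂
  refine ⟨by simpa only [RCLike.re_to_complex, Complex.ofReal_re] using h₁.re, ?_⟩
  rw [integral_complex_ofReal] at h₂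
  field_simp at h₂
  rw [mul_comm, ← mul_assoc]
  exact_mod_cast h₂.symm

theorem norm_multiToeplitz_le {L L' : Type*} [Fintype L] [Fintype L'] [DecidableEq L']
    {G : ℝ → Matrix L L' ℂ} (hG : ∀ a b, Integrable (fun θ => G θ a b) periodMeasure)
    {C : ℝ} (hC : 0 ≤ C) (hGC : ∀ᵐ θ ∂periodMeasure, ‖G θ‖ ≤ C) (m : L → ℕ) (m' : L' → ℕ) :
    ‖multiToeplitz G m m'‖ ≤ C := by
  classical
  refine l2_opNorm_le_of_norm_dotProduct_le hC fun u v hu hv => ?_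
  obtain ⟨hu_int, hu_eq⟩ := integral_norm_sq_expRow_mulVec u
  obtain ⟨hv_int, hv_eq⟩ := integral_norm_sq_expRow_mulVec v
  rw [(star_dotProduct_multiToeplitz_mulVec hG u v).2, norm_mul]
  have hbound : ‖∫ θ, star (expRow m θ *ᵥ u) ⬝ᵥ G θ *ᵥ (expRow m' θ *ᵥ v) ∂periodMeasure‖ ≤
      ∫ θ, C / 2 * (‖WithLp.toLp 2 (expRow m θ *ᵥ u)‖ ^ 2 +
        ‖WithLp.toLp 2 (expRow m' θ *ᵥ v)‖ ^ 2) ∂periodMeasure := by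
    refine norm_integral_le_of_norm_le ((hu_int.add hv_int).const_mul _) ?_
    filter_upwards [hGC] with θ hθ
    refine (norm_star_dotProduct_mulVec_le _ _ _).trans ?_
    set x := ‖WithLp.toLp 2 (expRow m θ *ᵥ u)‖
    set y := ‖WithLp.toLp 2 (expRow m' θ *ᵥ v)‖
    calc x * (‖G θ‖ * y) ≤ x * (C * y) := by gcongr
      _ ≤ C / 2 * (x ^ 2 + y ^ 2) := by nlinarith [mul_nonneg hC (sq_nonneg (x - y))]
  rw [integral_const_mul, integral_add hu_int hv_int, hu_eq, hv_eq, hu, hv] at hbound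
  calc ‖(2 * π : ℂ)⁻¹‖ * _ ≤ (2 * π)⁻¹ * (C / 2 * (2 * π * 1 ^ 2 + 2 * π * 1 ^ 2)) := by
        gcongr
        simp [abs_of_pos Real.pi_pos]
    _ = C := by
        field_simp
        ring

end NormBound

section ToeplitzAlgebra

lemma conjTranspose_multiToeplitz {L L' : Type*} (G : ℝ → Matrix L L' ℂ) (m : L → ℕ)
    (m' : L' → ℕ) : (multiToeplitz G m m')ᴴ = multiToeplitz (fun θ => (G θ)ᴴ) m' m := by
  ext p q
  simp only [multiToeplitz, conjTranspose_apply, of_apply, fCoeff_apply, star_expCoeff, neg_sub]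
  rfl

lemma isHermitian_multiToeplitz {L : Type*} {G : ℝ → Matrix L L ℂ}
    (hG : ∀ θ, (G θ).IsHermitian) (m : L → ℕ) : (multiToeplitz G m m).IsHermitian := by
  rw [IsHermitian, conjTranspose_multiToeplitz]
  simp only [(hG _).eq]

lemma multiToeplitz_sub {L L' : Type*} {G H : ℝ → Matrix L L' ℂ}
    (hG : ∀ a b, Integrable (fun θ => G θ a b) periodMeasure)
    (hH : ∀ a b, Integrable (fun θ => H θ a b) periodMeasure) (m : L → ℕ) (m' : L' → ℕ) :
    multiToeplitz (fun θ => G θ - H θ) m m' = multiToeplitz G m m' - multiToeplitz H m m' := by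
  ext p q
  simp only [multiToeplitz, Matrix.sub_apply, of_apply, fCoeff_apply, expCoeff, sub_mul]
  rw [integral_sub (integrable_mul_expI (hG _ _) _) (integrable_mul_expI (hH _ _) _), mul_sub]

lemma multiToeplitz_smul {L L' : Type*} (c : ℂ) (G : ℝ → Matrix L L' ℂ) (m : L → ℕ)
    (m' : L' → ℕ) : multiToeplitz (fun θ => c • G θ) m m' = c • multiToeplitz G m m' := by
  ext p q
  simp only [multiToeplitz, Matrix.smul_apply, of_apply, fCoeff_apply, smul_eq_mul]
  exact expCoeff_smul c _ _

lemma multiToeplitz_mul_conjTranspose_expRow_apply {L L' : Type*} [Fintype L] [DecidableEq L]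
    [Fintype L'] [DecidableEq L'] {m : L → ℕ} {m' : L' → ℕ} {P : ℝ → Matrix L L' ℂ} {d : ℕ}
    (hP : ∀ a b, (fun θ => P θ a b) ∈ trigPoly d) {p : (a : L) × Fin (m a)}
    (hp : d ≤ p.2) (hp' : ∀ b, p.2 + d < m' b) (θ : ℝ) (b : L') :
    (multiToeplitz P m m' * (expRow m' θ)ᴴ) p b = ((expRow m θ)ᴴ * P θ) p b := by
  rw [conjTranspose_expRow_mul_apply, ← sum_expCoeff_mul_expI (hP p.1 b) hp (hp' b),
    Matrix.mul_apply, Fintype.sum_sigma, Finset.sum_eq_single b]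
  · simp [-conjTranspose_apply, conjTranspose_expRow_apply, multiToeplitz, fCoeff_apply]
  · intro c _ hcb
    simp [-conjTranspose_apply, conjTranspose_expRow_apply, hcb]
  · simp

theorem multiToeplitz_mul_multiToeplitz_apply {L L' L'' : Type*} [Finite L] [Fintype L']
    [Finite L''] {m : L → ℕ} {m' : L' → ℕ} {m'' : L'' → ℕ} {P : ℝ → Matrix L L' ℂ} {d : ℕ}
    (hP : ∀ a b, (fun θ => P θ a b) ∈ trigPoly d) {H : ℝ → Matrix L' L'' ℂ}
    (hH : ∀ a b, Integrable (fun θ => H θ a b) periodMeasure) {p : (a : L) × Fin (m a)}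
    (hp : d ≤ p.2) (hp' : ∀ b, p.2 + d < m' b) (q : (c : L'') × Fin (m'' c)) :
    (multiToeplitz P m m' * multiToeplitz H m' m'') p q =
      multiToeplitz (fun θ => P θ * H θ) m m'' p q := by
  classical
  cases nonempty_fintype L
  cases nonempty_fintype L''
  have hrow (θ) : (multiToeplitz P m m' * ((expRow m' θ)ᴴ * H θ * expRow m'' θ)) p q =
      ((expRow m θ)ᴴ * (P θ * H θ) * expRow m'' θ) p q := by
    rw [Matrix.mul_assoc, ← Matrix.mul_assoc, Matrix.mul_apply, ← Matrix.mul_assoc,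
      Matrix.mul_assoc _ (H θ), Matrix.mul_apply]
    simp only [multiToeplitz_mul_conjTranspose_expRow_apply hP hp hp']
  have h := (map_multiToeplitz (m := m') (m' := m'') hH
    { toFun := fun M => (multiToeplitz P m m' * M) p q
      map_add' := fun M N => by rw [Matrix.mul_add, Matrix.add_apply]
      map_smul' := fun c M => by rw [Matrix.mul_smul, Matrix.smul_apply, RingHom.id_apply] }).2
  simp only [LinearMap.coe_mk, AddHom.coe_mk, hrow] at h
  rw [h, multiToeplitz_apply]

end ToeplitzAlgebra

section BoundaryRows

variable {L : Type*} [Fintype L]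

/-- The rows `⟨a, k⟩` for which the band of half-width `d` around the diagonal position `k` is
cut off in some block. -/
def boundaryRows (d : ℕ) (m : L → ℕ) : Finset ((a : L) × Fin (m a)) :=
  Finset.univ.sigma fun _ => {k | (k : ℕ) < d ∨ ∃ b, m b ≤ k + d}

lemma card_boundaryRows_le (d : ℕ) (m : L → ℕ) :
    (boundaryRows d m).card ≤ ∑ a, (d + ∑ b, (d + (m a - m b))) := by
  rw [boundaryRows, Finset.card_sigma]
  refine Finset.sum_le_sum fun a _ => ?_
  have hsub : ∀ k ∈ ({k | (k : ℕ) < d ∨ ∃ b, m b ≤ k + d} : Finset (Fin (m a))),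
      (k : ℕ) ∈ Finset.range d ∪ Finset.univ.biUnion fun b => Finset.Ico (m b - d) (m a) := by
    intro k hk
    simp only [Finset.mem_filter_univ, Finset.mem_union, Finset.mem_range, Finset.mem_biUnion,
      Finset.mem_univ, true_and, Finset.mem_Ico] at hk ⊢
    exact hk.imp_right fun ⟨b, hb⟩ => ⟨b, by omega, k.isLt⟩
  refine (Finset.card_le_card_of_injOn _ hsub Fin.val_injective.injOn).trans
    ((Finset.card_union_le _ _).trans ?_)
  rw [Finset.card_range]
  gcongr
  refine Finset.card_biUnion_le.trans (Finset.sum_le_sum fun b _ => ?_)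
  rw [Nat.card_Ico]
  omega

theorem tendsto_card_boundaryRows_div {α : Type*} {𝓁 : Filter α} {m : α → L → ℕ} {N : α → ℝ}
    (hN : Tendsto N 𝓁 atTop) (hm : ∀ a, Tendsto (fun n => m n a / N n) 𝓁 (𝓝 1)) (d : ℕ) :
    Tendsto (fun n => ((boundaryRows d (m n)).card : ℝ) / N n) 𝓁 (𝓝 0) := by
  have hd : Tendsto (fun n => (d : ℝ) / N n) 𝓁 (𝓝 0) := hN.const_div_atTop _
  have hlim : Tendsto (fun n => ∑ a, (d / N n + ∑ b, (d / N n + |m n a / N n - m n b / N n|)))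
      𝓁 (𝓝 0) := by
    have := tendsto_finsetSum Finset.univ fun a _ => hd.add <|
      tendsto_finsetSum Finset.univ fun b _ => hd.add ((hm a).sub (hm b)).abs
    simpa using this
  refine squeeze_zero' ?_ ?_ hlim
  all_goals filter_upwards [hN.eventually_gt_atTop 0] with n hn
  · positivity
  · have hcard : ((boundaryRows d (m n)).card : ℝ) ≤
        ∑ a, (d + ∑ b, (d + |(m n a : ℝ) - m n b|)) := by
      refine (Nat.cast_le.mpr (card_boundaryRows_le d (m n))).trans ?_
      push_cast
      gcongr with a _ b _
      rcases le_total (m n a) (m n b) with h | h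
      · simp [Nat.sub_eq_zero_of_le h]
      · rw [Nat.cast_sub h]
        exact le_abs_self _
    refine (div_le_div_of_nonneg_right hcard hn.le).trans_eq ?_
    simp only [Finset.sum_div, add_div, ← sub_div, abs_div, abs_of_pos hn]

end BoundaryRows

section Resolvent

open scoped Matrix.Norms.L2Operator

variable {L : Type*} [Fintype L] [DecidableEq L] {G : ℝ → Matrix L L ℂ} {z : ℂ}

lemma resolvent_apply_eq_det_mul_adjugate (A : Matrix L L ℂ) (z : ℂ) (a b : L) :
    resolvent A z a b = (algebraMap ℂ _ z - A).det⁻¹ * (algebraMap ℂ _ z - A).adjugate a b := by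
  rw [resolvent, ← nonsing_inv_eq_ringInverse, Matrix.inv_def, Matrix.smul_apply,
    Ring.inverse_eq_inv, smul_eq_mul]

lemma integrable_resolvent_apply (hG : ∀ a b, Integrable (fun θ => G θ a b) periodMeasure)
    (hherm : ∀ θ, (G θ).IsHermitian) (hz : z.im ≠ 0) (a b : L) :
    Integrable (fun θ => resolvent (G θ) z a b) periodMeasure := by
  refine Integrable.of_bound (C := |z.im|⁻¹) ?_ (Eventually.of_forall fun θ =>
    (norm_apply_le_l2_opNorm _ a b).trans (norm_resolvent_le (hherm θ) hz))
  have hG_meas : AEStronglyMeasurable G periodMeasure :=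
    (aemeasurable_pi_lambda _ fun a => aemeasurable_pi_lambda _ fun b =>
      (hG a b).aemeasurable).aestronglyMeasurable
  have hdet : Continuous fun A : Matrix L L ℂ => (algebraMap ℂ _ z - A).det := by fun_prop
  have hadj : Continuous fun A : Matrix L L ℂ => (algebraMap ℂ _ z - A).adjugate a b := by
    fun_prop
  simp only [resolvent_apply_eq_det_mul_adjugate]
  exact (hdet.comp_aestronglyMeasurable hG_meas).inv₀.mul
    (hadj.comp_aestronglyMeasurable hG_meas)

lemma norm_trace_sub_trace_resolvent_le {ι : Type*} [Fintype ι] [DecidableEq ι]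
    {A R : Matrix ι ι ℂ} {S : Finset ι} {C : ℝ} (hA : A.IsHermitian) (hz : z.im ≠ 0)
    (hAR : ∀ p ∉ S, ∀ q, ((algebraMap ℂ _ z - A) * R) p q = (1 : Matrix ι ι ℂ) p q)
    (hA_norm : ‖A‖ ≤ C) (hR_norm : ‖R‖ ≤ |z.im|⁻¹) :
    ‖R.trace - (resolvent A z).trace‖ ≤
      S.card * ((‖z‖ + C) * (|z.im|⁻¹ * |z.im|⁻¹) + |z.im|⁻¹) := by
  have hC : 0 ≤ C := (norm_nonneg A).trans hA_norm
  set X := resolvent A z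
  have hXA : X * (algebraMap ℂ _ z - A) = 1 :=
    Ring.inverse_mul_cancel _ (mem_resolventSet_of_im_ne_zero hA hz)
  have hX_norm : ‖X‖ ≤ |z.im|⁻¹ := norm_resolvent_le hA hz
  set B := (algebraMap ℂ _ z - A) * R - 1 with hB
  have hB_zero : ∀ p ∉ S, ∀ q, B p q = 0 := fun p hp q => by
    rw [hB, Matrix.sub_apply, hAR p hp, sub_self]
  have htrace : R.trace - X.trace = ∑ p ∈ S, (B * X) p p := by
    have hRX : R - X = X * B := by rw [hB, mul_sub, mul_one, ← mul_assoc, hXA, one_mul]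
    rw [← trace_sub, hRX, trace_mul_comm, trace]
    refine (Finset.sum_subset (Finset.subset_univ _) fun p _ hp => ?_).symm
    simp [Matrix.mul_apply, hB_zero p hp]
  have hBX : ‖B * X‖ ≤ (‖z‖ + C) * (|z.im|⁻¹ * |z.im|⁻¹) + |z.im|⁻¹ := by
    have hexpand : B * X = z • (R * X) - A * (R * X) - X := by
      rw [hB, sub_mul, sub_mul, one_mul, sub_mul, Algebra.smul_def, mul_assoc, mul_assoc]
    have hRX_norm : ‖R * X‖ ≤ |z.im|⁻¹ * |z.im|⁻¹ := (norm_mul_le _ _).trans (by gcongr)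
    rw [hexpand, add_mul]
    refine (norm_sub_le _ _).trans (add_le_add ((norm_sub_le _ _).trans (add_le_add ?_ ?_)) hX_norm)
    · rw [norm_smul]
      gcongr
    · exact (norm_mul_le _ _).trans (by gcongr)
  rw [htrace]
  refine (norm_sum_le_of_le _ fun p _ => (norm_apply_le_l2_opNorm _ p p).trans hBX).trans_eq ?_
  rw [Finset.sum_const, nsmul_eq_mul]

variable {P : ℝ → Matrix L L ℂ} {d : ℕ}

lemma resolvent_identity_multiToeplitz_apply (hP : ∀ a b, (fun θ => P θ a b) ∈ trigPoly d)
    (hherm : ∀ θ, (P θ).IsHermitian) (hz : z.im ≠ 0) {m : L → ℕ} {p : (a : L) × Fin (m a)}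
    (hp : p ∉ boundaryRows d m) (q : (a : L) × Fin (m a)) :
    ((algebraMap ℂ _ z - multiToeplitz P m m) *
      multiToeplitz (fun θ => resolvent (P θ) z) m m) p q =
      (1 : Matrix ((a : L) × Fin (m a)) ((a : L) × Fin (m a)) ℂ) p q := by
  have hR := integrable_resolvent_apply (fun a b => integrable_of_mem_trigPoly (hP a b)) hherm hz
  have hPR (θ) : P θ * resolvent (P θ) z = z • resolvent (P θ) z - 1 := by
    have h := Ring.mul_inverse_cancel _ (mem_resolventSet_of_im_ne_zero (hherm θ) hz)
    rw [← resolvent, sub_mul, ← Algebra.smul_def] at h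
    rw [← h, sub_sub_cancel]
  obtain ⟨hp₁, hp₂⟩ : d ≤ p.2 ∧ ∀ b, p.2 + d < m b := by
    simpa [boundaryRows, not_or] using hp
  rw [sub_mul, Matrix.sub_apply, multiToeplitz_mul_multiToeplitz_apply hP hR hp₁ hp₂]
  simp only [hPR]
  rw [multiToeplitz_sub (G := fun θ => z • resolvent (P θ) z) (H := fun _ => 1)
    (fun a b => (hR a b).const_mul z) (fun a b => integrable_const _), multiToeplitz_smul,
    multiToeplitz_one, ← Algebra.smul_def, Matrix.sub_apply, sub_sub_cancel]

theorem norm_trace_multiToeplitz_resolvent_sub_le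
    (hP : ∀ a b, (fun θ => P θ a b) ∈ trigPoly d) (hherm : ∀ θ, (P θ).IsHermitian)
    {C : ℝ} (hC : 0 ≤ C) (hPC : ∀ᵐ θ ∂periodMeasure, ‖P θ‖ ≤ C) (hz : z.im ≠ 0) (m : L → ℕ) :
    ‖(multiToeplitz (fun θ => resolvent (P θ) z) m m).trace -
        (resolvent (multiToeplitz P m m) z).trace‖ ≤
      (boundaryRows d m).card * ((‖z‖ + C) * (|z.im|⁻¹ * |z.im|⁻¹) + |z.im|⁻¹) := by
  have hP_int (a b) := integrable_of_mem_trigPoly (hP a b)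
  refine norm_trace_sub_trace_resolvent_le (isHermitian_multiToeplitz hherm m) hz
    (fun p hp => resolvent_identity_multiToeplitz_apply hP hherm hz hp)
    (norm_multiToeplitz_le hP_int hC hPC m m) ?_
  exact norm_multiToeplitz_le (integrable_resolvent_apply hP_int hherm hz) (by positivity)
    (Eventually.of_forall fun θ => norm_resolvent_le (hherm θ) hz) m m

end Resolvent

section TrigonometricApproximation

lemma exists_trigPoly_integral_entrySum_sub_le {L L' : Type*} [Fintype L] [Fintype L']
    {G : ℝ → Matrix L L' ℂ} (hG : ∀ a b, Integrable (fun θ => G θ a b) periodMeasure)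
    {ε : ℝ} (hε : 0 < ε) :
    ∃ (d : ℕ) (Q : ℝ → Matrix L L' ℂ), (∀ a b, (fun θ => Q θ a b) ∈ trigPoly d) ∧
      ∫ θ, entrySum (G θ - Q θ) ∂periodMeasure ≤ ε := by
  set δ := ε / (Fintype.card L * Fintype.card L' + 1)
  have hδ : 0 < δ := by positivity
  choose d Q hQ hGQ using fun a b => exists_mem_trigPoly_integral_norm_sub_le (hG a b) hδ
  have hd (a b) : d a b ≤ ∑ a, ∑ b, d a b :=
    (Finset.single_le_sum (f := d a) (by simp) (Finset.mem_univ b)).trans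
      (Finset.single_le_sum (f := fun a => ∑ b, d a b) (by simp) (Finset.mem_univ a))
  have hint (a b) : Integrable (fun θ => ‖G θ a b - Q a b θ‖) periodMeasure :=
    ((hG a b).sub (integrable_of_mem_trigPoly (hQ a b))).norm
  refine ⟨∑ a, ∑ b, d a b, fun θ => of fun a b => Q a b θ,
    fun a b => trigPoly_mono (hd a b) (hQ a b), ?_⟩
  calc ∫ θ, ∑ a, ∑ b, ‖G θ a b - Q a b θ‖ ∂periodMeasure
      = ∑ a, ∑ b, ∫ θ, ‖G θ a b - Q a b θ‖ ∂periodMeasure := by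
        rw [integral_finsetSum _ fun a _ => integrable_finsetSum _ fun b _ => hint a b]
        exact Finset.sum_congr rfl fun a _ => integral_finsetSum _ fun b _ => hint a b
    _ ≤ ∑ _a : L, ∑ _b : L', δ := Finset.sum_le_sum fun a _ => Finset.sum_le_sum fun b _ => hGQ a b
    _ = Fintype.card L * Fintype.card L' * δ := by simp [mul_assoc]
    _ ≤ (Fintype.card L * Fintype.card L' + 1) * δ := by gcongr; simp
    _ = ε := mul_div_cancel₀ _ (by positivity)

lemma entrySum_sub_symmetrization_le {L : Type*} [Fintype L] {A : Matrix L L ℂ}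
    (hA : A.IsHermitian) (Q : Matrix L L ℂ) :
    entrySum (A - (2 : ℂ)⁻¹ • (Q + Qᴴ)) ≤ entrySum (A - Q) := by
  have hswap : entrySum (A - Q) = ∑ a, ∑ b, ‖(A - Q) b a‖ := Finset.sum_comm
  have hentry (a b) : ‖(A - (2 : ℂ)⁻¹ • (Q + Qᴴ)) a b‖ ≤
      2⁻¹ * ‖(A - Q) a b‖ + 2⁻¹ * ‖(A - Q) b a‖ := by
    have hab : (A - (2 : ℂ)⁻¹ • (Q + Qᴴ)) a b =
        2⁻¹ * (A - Q) a b + 2⁻¹ * star ((A - Q) b a) := by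
      simp only [Matrix.sub_apply, Matrix.smul_apply, Matrix.add_apply, conjTranspose_apply,
        star_sub, smul_eq_mul, hA.apply a b]
      ring
    rw [hab]
    refine (norm_add_le _ _).trans_eq ?_
    simp only [norm_mul, norm_star, norm_inv, RCLike.norm_ofNat]
  calc entrySum (A - (2 : ℂ)⁻¹ • (Q + Qᴴ))
      ≤ ∑ a, ∑ b, (2⁻¹ * ‖(A - Q) a b‖ + 2⁻¹ * ‖(A - Q) b a‖) :=
        Finset.sum_le_sum fun a _ => Finset.sum_le_sum fun b _ => hentry a b
    _ = 2⁻¹ * entrySum (A - Q) + 2⁻¹ * ∑ a, ∑ b, ‖(A - Q) b a‖ := by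
        simp only [Finset.sum_add_distrib, ← Finset.mul_sum, entrySum]
    _ = entrySum (A - Q) := by
        rw [← hswap]
        ring

theorem exists_isHermitian_trigPoly_integral_entrySum_sub_le {L : Type*} [Fintype L]
    {G : ℝ → Matrix L L ℂ} (hG : ∀ a b, Integrable (fun θ => G θ a b) periodMeasure)
    (hherm : ∀ θ, (G θ).IsHermitian) {ε : ℝ} (hε : 0 < ε) :
    ∃ (d : ℕ) (P : ℝ → Matrix L L ℂ), (∀ a b, (fun θ => P θ a b) ∈ trigPoly d) ∧
      (∀ θ, (P θ).IsHermitian) ∧ ∫ θ, entrySum (G θ - P θ) ∂periodMeasure ≤ ε := by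
  obtain ⟨d, Q, hQ, hGQ⟩ := exists_trigPoly_integral_entrySum_sub_le hG hε
  refine ⟨d, fun θ => (2 : ℂ)⁻¹ • (Q θ + (Q θ)ᴴ), fun a b => ?_, fun θ => ?_, ?_⟩
  · exact (trigPoly d).smul_mem _ ((trigPoly d).add_mem (hQ a b) (star_mem_trigPoly (hQ b a)))
  · simp [IsHermitian, add_comm]
  · exact (integral_mono_of_nonneg (Eventually.of_forall fun θ => entrySum_nonneg _)
      (integrable_entrySum fun a b => (hG a b).sub (integrable_of_mem_trigPoly (hQ a b)))
      (Eventually.of_forall fun θ => entrySum_sub_symmetrization_le (hherm θ) (Q θ))).trans hGQ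

end TrigonometricApproximation

section EigenvalueDistribution

open scoped Matrix.Norms.L2Operator

lemma tendsto_trace_multiToeplitz {L α : Type*} [Fintype L] {G : ℝ → Matrix L L ℂ}
    {𝓁 : Filter α} {m : α → L → ℕ} {N : α → ℝ}
    (hG : ∀ a, Integrable (fun θ => G θ a a) periodMeasure)
    (hm : ∀ a, Tendsto (fun n => m n a / N n) 𝓁 (𝓝 1)) :
    Tendsto (fun n => (N n : ℂ)⁻¹ * (multiToeplitz G (m n) (m n)).trace) 𝓁
      (𝓝 ((2 * π : ℂ)⁻¹ * ∫ θ, (G θ).trace ∂periodMeasure)) := by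
  have htrace (n) : (N n : ℂ)⁻¹ * (multiToeplitz G (m n) (m n)).trace =
      ∑ a, ((m n a / N n : ℝ) : ℂ) * expCoeff (fun θ => G θ a a) 0 := by
    simp only [trace, diag_apply, multiToeplitz, of_apply, sub_self, fCoeff_apply,
      Fintype.sum_sigma, Finset.sum_const, Finset.card_univ, Fintype.card_fin, nsmul_eq_mul,
      Finset.mul_sum]
    push_cast
    ring_nf
  have hlim : (2 * π : ℂ)⁻¹ * ∫ θ, (G θ).trace ∂periodMeasure =
      ∑ a, ((1 : ℝ) : ℂ) * expCoeff (fun θ => G θ a a) 0 := by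
    simp only [trace, diag_apply, integral_finsetSum _ fun a _ => hG a, Finset.mul_sum, expCoeff,
      neg_zero, expI_zero, mul_one, Complex.ofReal_one, one_mul]
  rw [hlim]
  simp only [htrace]
  exact tendsto_finsetSum _ fun a _ =>
    ((Complex.continuous_ofReal.tendsto 1).comp (hm a)).mul_const _

variable {L : Type*} [Fintype L] [DecidableEq L] {G : ℝ → Matrix L L ℂ} {z : ℂ}
  {α : Type*} {𝓁 : Filter α} {m : α → L → ℕ} {N : α → ℝ}

lemma exists_ae_norm_le_of_trigPoly {P : ℝ → Matrix L L ℂ} {d : ℕ}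
    (hP : ∀ a b, (fun θ => P θ a b) ∈ trigPoly d) :
    ∃ C, 0 ≤ C ∧ ∀ᵐ θ ∂periodMeasure, ‖P θ‖ ≤ C := by
  have hcont : Continuous P := continuous_pi fun a => continuous_pi fun b =>
    continuous_of_mem_trigPoly (hP a b)
  obtain ⟨C, hC⟩ := isCompact_Icc.exists_bound_of_continuousOn (hcont.continuousOn)
  exact ⟨C ⊔ 0, le_sup_right, ae_restrict_of_forall_mem measurableSet_Icc fun θ hθ =>
    (hC θ hθ).trans le_sup_left⟩

theorem tendsto_trace_resolvent_multiToeplitz_of_trigPoly {P : ℝ → Matrix L L ℂ} {d : ℕ}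
    (hP : ∀ a b, (fun θ => P θ a b) ∈ trigPoly d) (hherm : ∀ θ, (P θ).IsHermitian)
    (hz : z.im ≠ 0) (hN : Tendsto N 𝓁 atTop)
    (hm : ∀ a, Tendsto (fun n => m n a / N n) 𝓁 (𝓝 1)) :
    Tendsto (fun n => (N n : ℂ)⁻¹ * (resolvent (multiToeplitz P (m n) (m n)) z).trace) 𝓁
      (𝓝 ((2 * π : ℂ)⁻¹ * ∫ θ, (resolvent (P θ) z).trace ∂periodMeasure)) := by
  obtain ⟨C, hC, hPC⟩ := exists_ae_norm_le_of_trigPoly hP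
  have hR := integrable_resolvent_apply (fun a b => integrable_of_mem_trigPoly (hP a b)) hherm hz
  refine (tendsto_trace_multiToeplitz (fun a => hR a a) hm).congr_dist ?_
  set K := (‖z‖ + C) * (|z.im|⁻¹ * |z.im|⁻¹) + |z.im|⁻¹
  have hlim : Tendsto (fun n => ((boundaryRows d (m n)).card : ℝ) / N n * K) 𝓁 (𝓝 0) := by
    simpa using (tendsto_card_boundaryRows_div hN hm d).mul_const K
  refine squeeze_zero' (Eventually.of_forall fun _ => dist_nonneg) ?_ hlim
  filter_upwards [hN.eventually_gt_atTop 0] with n hn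
  rw [dist_eq_norm, ← mul_sub, norm_mul, norm_inv, Complex.norm_of_nonneg hn.le,
    div_eq_inv_mul, mul_assoc]
  gcongr
  exact norm_trace_multiToeplitz_resolvent_sub_le hP hherm hC hPC hz (m n)

lemma trace_resolvent_sub_trace_resolvent {ι : Type*} [Fintype ι] [DecidableEq ι]
    {A B : Matrix ι ι ℂ} (hA : A.IsHermitian) (hB : B.IsHermitian) (hz : z.im ≠ 0) :
    (resolvent A z).trace - (resolvent B z).trace =
      (resolvent B z * resolvent A z * (A - B)).trace := by
  rw [← trace_sub, resolvent_sub_resolvent_of_isHermitian hA hB hz, trace_mul_comm, ← mul_assoc]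

lemma norm_resolvent_mul_resolvent_le {ι : Type*} [Fintype ι] [DecidableEq ι]
    {A B : Matrix ι ι ℂ} (hA : A.IsHermitian) (hB : B.IsHermitian) (hz : z.im ≠ 0) :
    ‖resolvent A z * resolvent B z‖ ≤ |z.im|⁻¹ * |z.im|⁻¹ :=
  (norm_mul_le _ _).trans (mul_le_mul (norm_resolvent_le hA hz) (norm_resolvent_le hB hz)
    (norm_nonneg _) (by positivity))

lemma norm_integral_trace_resolvent_sub_le {P : ℝ → Matrix L L ℂ}
    (hG : ∀ a b, Integrable (fun θ => G θ a b) periodMeasure)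
    (hP : ∀ a b, Integrable (fun θ => P θ a b) periodMeasure)
    (hGherm : ∀ θ, (G θ).IsHermitian) (hPherm : ∀ θ, (P θ).IsHermitian) (hz : z.im ≠ 0) :
    ‖∫ θ, (resolvent (G θ) z).trace ∂periodMeasure -
        ∫ θ, (resolvent (P θ) z).trace ∂periodMeasure‖ ≤
      |z.im|⁻¹ * |z.im|⁻¹ * ∫ θ, entrySum (G θ - P θ) ∂periodMeasure := by
  have hint {H : ℝ → Matrix L L ℂ} (hH : ∀ a b, Integrable (fun θ => H θ a b) periodMeasure)
      (hherm : ∀ θ, (H θ).IsHermitian) :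
      Integrable (fun θ => (resolvent (H θ) z).trace) periodMeasure :=
    integrable_finsetSum _ fun a _ => integrable_resolvent_apply hH hherm hz a a
  rw [← integral_sub (hint hG hGherm) (hint hP hPherm), ← integral_const_mul]
  refine norm_integral_le_of_norm_le
    ((integrable_entrySum fun a b => (hG a b).sub (hP a b)).const_mul _)
    (Eventually.of_forall fun θ => ?_)
  rw [trace_resolvent_sub_trace_resolvent (hGherm θ) (hPherm θ) hz]
  exact (norm_trace_mul_le _ _).trans (mul_le_mul_of_nonneg_right
    (norm_resolvent_mul_resolvent_le (hPherm θ) (hGherm θ) hz) (entrySum_nonneg _))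

lemma norm_trace_resolvent_multiToeplitz_sub_le {P : ℝ → Matrix L L ℂ}
    (hG : ∀ a b, Integrable (fun θ => G θ a b) periodMeasure)
    (hP : ∀ a b, Integrable (fun θ => P θ a b) periodMeasure)
    (hGherm : ∀ θ, (G θ).IsHermitian) (hPherm : ∀ θ, (P θ).IsHermitian) (hz : z.im ≠ 0)
    {k : L → ℕ} {M : ℝ} (hM : 0 ≤ M) (hk : ∀ a, (k a : ℝ) ≤ M) :
    ‖(resolvent (multiToeplitz G k k) z).trace - (resolvent (multiToeplitz P k k) z).trace‖ ≤
      (2 * π)⁻¹ * (|z.im|⁻¹ * |z.im|⁻¹ * M * ∫ θ, entrySum (G θ - P θ) ∂periodMeasure) := by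
  have hTG := isHermitian_multiToeplitz hGherm k
  have hTP := isHermitian_multiToeplitz hPherm k
  rw [trace_resolvent_sub_trace_resolvent hTG hTP hz, ← multiToeplitz_sub hG hP]
  refine (norm_trace_mul_multiToeplitz_le (D := fun θ => G θ - P θ)
    (fun a b => (hG a b).sub (hP a b)) _ hM hk).trans ?_
  have hnonneg : 0 ≤ ∫ θ, entrySum (G θ - P θ) ∂periodMeasure :=
    integral_nonneg fun θ => entrySum_nonneg _
  have := norm_resolvent_mul_resolvent_le hTP hTG hz
  gcongr

theorem tendsto_trace_resolvent_multiToeplitz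
    (hG : ∀ a b, Integrable (fun θ => G θ a b) periodMeasure) (hherm : ∀ θ, (G θ).IsHermitian)
    (hz : z.im ≠ 0) (hN : Tendsto N 𝓁 atTop)
    (hm : ∀ a, Tendsto (fun n => m n a / N n) 𝓁 (𝓝 1)) :
    Tendsto (fun n => (N n : ℂ)⁻¹ * (resolvent (multiToeplitz G (m n) (m n)) z).trace) 𝓁
      (𝓝 ((2 * π : ℂ)⁻¹ * ∫ θ, (resolvent (G θ) z).trace ∂periodMeasure)) := by
  refine tendsto_of_forall_approx fun ε hε => ?_
  set r := |z.im|⁻¹ * |z.im|⁻¹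
  have hr : 0 < r := by positivity
  obtain ⟨d, P, hP, hPherm, hGP⟩ := exists_isHermitian_trigPoly_integral_entrySum_sub_le hG hherm
    (ε := π * (ε / r)) (by positivity)
  have hP_int (a b) := integrable_of_mem_trigPoly (hP a b)
  have hrGP : r * ∫ θ, entrySum (G θ - P θ) ∂periodMeasure ≤ π * ε :=
    (mul_le_mul_of_nonneg_left hGP hr.le).trans_eq (by field_simp)
  refine ⟨_, _, tendsto_trace_resolvent_multiToeplitz_of_trigPoly hP hPherm hz hN hm, ?_, ?_⟩
  · have hm_le : ∀ᶠ n in 𝓁, ∀ a, m n a / N n ≤ 2 :=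
      eventually_all.mpr fun a => (hm a).eventually_le_const one_lt_two
    filter_upwards [hN.eventually_gt_atTop 0, hm_le] with n hn hmn
    rw [← mul_sub, norm_mul, norm_inv, Complex.norm_of_nonneg hn.le, inv_mul_le_iff₀ hn]
    calc _ ≤ (2 * π)⁻¹ * (r * (2 * N n) * ∫ θ, entrySum (G θ - P θ) ∂periodMeasure) :=
          norm_trace_resolvent_multiToeplitz_sub_le hG hP_int hherm hPherm hz (by positivity)
            fun a => (div_le_iff₀ hn).mp (hmn a)
      _ = N n * π⁻¹ * (r * ∫ θ, entrySum (G θ - P θ) ∂periodMeasure) := by ring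
      _ ≤ N n * π⁻¹ * (π * ε) := by gcongr
      _ = N n * ε := by field_simp
  · rw [← mul_sub, norm_mul, norm_inv, norm_mul, Complex.norm_of_nonneg Real.pi_nonneg,
      RCLike.norm_ofNat]
    calc _ ≤ (2 * π)⁻¹ * (π * ε) := by
          gcongr
          exact (norm_integral_trace_resolvent_sub_le hG hP_int hherm hPherm hz).trans hrGP
      _ ≤ ε := by
          field_simp
          linarith

/-- The sum over the eigenvalues as a functional on `C(OnePoint ℝ, ℂ)`; it is meant for Hermitian
matrices, so that only the real parts of the eigenvalues are fed to the test function. -/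
def eigFunctional {ι : Type*} [Fintype ι] [DecidableEq ι] (A : Matrix ι ι ℂ) :
    C(OnePoint ℝ, ℂ) →ₗ[ℂ] ℂ where
  toFun g := eigSum (fun w => g (w.re : OnePoint ℝ)) A
  map_add' _ _ := eigSum_add _ _ A
  map_smul' c _ := eigSum_const_mul c _ A

lemma eigFunctional_apply {ι : Type*} [Fintype ι] [DecidableEq ι] (A : Matrix ι ι ℂ)
    (g : C(OnePoint ℝ, ℂ)) : eigFunctional A g = eigSum (fun w => g (w.re : OnePoint ℝ)) A :=
  rfl

lemma eigFunctional_one {ι : Type*} [Fintype ι] [DecidableEq ι] (A : Matrix ι ι ℂ) :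
    eigFunctional A 1 = Fintype.card ι :=
  (eigSum_const 1 A).trans (mul_one _)

lemma eigFunctional_resolventFun {ι : Type*} [Fintype ι] [DecidableEq ι] {A : Matrix ι ι ℂ}
    (hA : A.IsHermitian) (hz : z.im ≠ 0) :
    eigFunctional A (resolventFun z hz) = (resolvent A z).trace :=
  (trace_resolvent hA hz).symm

lemma norm_eigFunctional_le {ι : Type*} [Fintype ι] [DecidableEq ι] {A : Matrix ι ι ℂ}
    (hA : A.IsHermitian) (g : C(OnePoint ℝ, ℂ)) :
    ‖eigFunctional A g‖ ≤ Fintype.card ι * ‖g‖ :=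
  norm_eigSum_le hA fun _ => g.norm_coe_le_norm _

theorem integrable_eigFunctional
    (hG : ∀ a b, Integrable (fun θ => G θ a b) periodMeasure) (hherm : ∀ θ, (G θ).IsHermitian)
    (g : C(OnePoint ℝ, ℂ)) : Integrable (fun θ => eigFunctional (G θ) g) periodMeasure := by
  let W : Submodule ℂ C(OnePoint ℝ, ℂ) :=
    { carrier := {g | Integrable (fun θ => eigFunctional (G θ) g) periodMeasure}
      zero_mem' := by simp
      add_mem' := fun hg hh => by
        simp only [Set.mem_ofPred_eq, map_add]
        exact Integrable.add hg hh
      smul_mem' := fun c _ hg => by simpa using Integrable.const_mul hg c }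
  have hW : IsClosed (W : Set C(OnePoint ℝ, ℂ)) := by
    refine IsSeqClosed.isClosed fun g g₀ hg hlim => ?_
    refine Integrable.of_bound (C := Fintype.card L * ‖g₀‖) ?_
      (Eventually.of_forall fun θ => norm_eigFunctional_le (hherm θ) g₀)
    have hcont (θ) : Continuous (eigFunctional (G θ)) :=
      AddMonoidHomClass.continuous_of_bound _ _ (norm_eigFunctional_le (hherm θ))
    exact aestronglyMeasurable_of_tendsto_ae atTop (fun n => (hg n).aestronglyMeasurable)
      (Eventually.of_forall fun θ => ((hcont θ).tendsto g₀).comp hlim)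
  suffices hW_top : W = ⊤ from (hW_top ▸ trivial : g ∈ W)
  refine eq_top_of_isClosed_of_resolventFun_mem hW ?_ fun z hz => ?_
  · simp [W, eigFunctional_one]
  · simp only [W, Submodule.mem_mk, AddSubmonoid.mem_mk, AddSubsemigroup.mem_mk, Set.mem_ofPred_eq,
      eigFunctional_resolventFun (hherm _) hz]
    exact integrable_finsetSum _ fun a _ => integrable_resolvent_apply hG hherm hz a a

lemma norm_integral_eigFunctional_le (hherm : ∀ θ, (G θ).IsHermitian) (g : C(OnePoint ℝ, ℂ)) :
    ‖(2 * π : ℂ)⁻¹ * ∫ θ, eigFunctional (G θ) g ∂periodMeasure‖ ≤ Fintype.card L * ‖g‖ := by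
  rw [norm_mul, norm_inv, norm_mul, Complex.norm_of_nonneg Real.pi_nonneg, RCLike.norm_ofNat,
    inv_mul_le_iff₀ (by positivity)]
  refine (norm_integral_le_of_norm_le_const (Eventually.of_forall fun θ =>
    norm_eigFunctional_le (hherm θ) g)).trans_eq ?_
  rw [measureReal_periodMeasure_univ]
  ring

lemma norm_eigFunctional_multiToeplitz_le (hherm : ∀ θ, (G θ).IsHermitian)
    (g : C(OnePoint ℝ, ℂ)) {k : L → ℕ} {M : ℝ} (hk : ∀ a, (k a : ℝ) ≤ M) :
    ‖eigFunctional (multiToeplitz G k k) g‖ ≤ M * (Fintype.card L * ‖g‖) := by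
  refine (norm_eigFunctional_le (isHermitian_multiToeplitz hherm k) g).trans ?_
  rw [← mul_assoc]
  gcongr
  simpa [mul_comm] using Finset.sum_le_sum fun a (_ : a ∈ Finset.univ) => hk a

lemma isClosed_setOf_tendsto_eigFunctional_multiToeplitz
    (hG : ∀ a b, Integrable (fun θ => G θ a b) periodMeasure) (hherm : ∀ θ, (G θ).IsHermitian)
    (hN : Tendsto N 𝓁 atTop) (hm : ∀ a, Tendsto (fun n => m n a / N n) 𝓁 (𝓝 1)) :
    IsClosed {g : C(OnePoint ℝ, ℂ) |
      Tendsto (fun n => (N n : ℂ)⁻¹ * eigFunctional (multiToeplitz G (m n) (m n)) g) 𝓁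
        (𝓝 ((2 * π : ℂ)⁻¹ * ∫ θ, eigFunctional (G θ) g ∂periodMeasure))} := by
  refine isClosed_of_closure_subset fun g hg => tendsto_of_forall_approx fun ε hε => ?_
  obtain ⟨h, hh, hgh⟩ := Metric.mem_closure_iff.mp hg (ε / (2 * Fintype.card L + 1))
    (by positivity)
  have hε_le : 2 * (Fintype.card L * ‖g - h‖) ≤ ε := by
    rw [dist_eq_norm, lt_div_iff₀ (by positivity)] at hgh
    linarith [norm_nonneg (g - h)]
  refine ⟨_, _, hh, ?_, ?_⟩
  · have hm_le : ∀ᶠ n in 𝓁, ∀ a, m n a / N n ≤ 2 :=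
      eventually_all.mpr fun a => (hm a).eventually_le_const one_lt_two
    filter_upwards [hN.eventually_gt_atTop 0, hm_le] with n hn hmn
    rw [← mul_sub, norm_mul, norm_inv, Complex.norm_of_nonneg hn.le, inv_mul_le_iff₀ hn, ← map_sub]
    calc _ ≤ 2 * N n * (Fintype.card L * ‖g - h‖) :=
          norm_eigFunctional_multiToeplitz_le hherm _ fun a => (div_le_iff₀ hn).mp (hmn a)
      _ = N n * (2 * (Fintype.card L * ‖g - h‖)) := by ring
      _ ≤ N n * ε := by gcongr
  · rw [← mul_sub, ← integral_sub (integrable_eigFunctional hG hherm g)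
      (integrable_eigFunctional hG hherm h)]
    simp only [← map_sub]
    refine (norm_integral_eigFunctional_le hherm _).trans (le_trans ?_ hε_le)
    exact le_mul_of_one_le_left (by positivity) one_le_two

theorem tendsto_eigFunctional_multiToeplitz
    (hG : ∀ a b, Integrable (fun θ => G θ a b) periodMeasure) (hherm : ∀ θ, (G θ).IsHermitian)
    (hN : Tendsto N 𝓁 atTop) (hm : ∀ a, Tendsto (fun n => m n a / N n) 𝓁 (𝓝 1))
    (g : C(OnePoint ℝ, ℂ)) :
    Tendsto (fun n => (N n : ℂ)⁻¹ * eigFunctional (multiToeplitz G (m n) (m n)) g) 𝓁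
      (𝓝 ((2 * π : ℂ)⁻¹ * ∫ θ, eigFunctional (G θ) g ∂periodMeasure)) := by
  let W : Submodule ℂ C(OnePoint ℝ, ℂ) :=
    { carrier := {g | Tendsto
        (fun n => (N n : ℂ)⁻¹ * eigFunctional (multiToeplitz G (m n) (m n)) g) 𝓁
        (𝓝 ((2 * π : ℂ)⁻¹ * ∫ θ, eigFunctional (G θ) g ∂periodMeasure))}
      zero_mem' := by simpa using tendsto_const_nhds
      add_mem' := fun {g h} hg hh => by
        simp only [Set.mem_ofPred_eq, map_add, mul_add,
          integral_add (integrable_eigFunctional hG hherm g) (integrable_eigFunctional hG hherm h)]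
        exact Tendsto.add hg hh
      smul_mem' := fun c g hg => by
        simp only [Set.mem_ofPred_eq, map_smul, smul_eq_mul, integral_const_mul,
          mul_left_comm _ c]
        exact Tendsto.const_mul c hg }
  suffices hW_top : W = ⊤ from (hW_top ▸ trivial : g ∈ W)
  refine eq_top_of_isClosed_of_resolventFun_mem
    (isClosed_setOf_tendsto_eigFunctional_multiToeplitz hG hherm hN hm) ?_ fun z hz => ?_
  · have := tendsto_trace_multiToeplitz (G := fun _ => (1 : Matrix L L ℂ))
      (fun a => integrable_const _) hm
    simpa only [W, Submodule.mem_mk, AddSubmonoid.mem_mk, AddSubsemigroup.mem_mk,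
      Set.mem_ofPred_eq, eigFunctional_one, multiToeplitz_one, trace_one] using this
  · simp only [W, Submodule.mem_mk, AddSubmonoid.mem_mk, AddSubsemigroup.mem_mk,
      Set.mem_ofPred_eq, eigFunctional_resolventFun (hherm _) hz,
      eigFunctional_resolventFun (isHermitian_multiToeplitz hherm _) hz]
    exact tendsto_trace_resolvent_multiToeplitz hG hherm hz hN hm

lemma eigSum_eq_eigFunctional {ι : Type*} [Fintype ι] [DecidableEq ι] {A : Matrix ι ι ℂ}
    (hA : A.IsHermitian) {F : ℂ → ℂ} {g : C(OnePoint ℝ, ℂ)} (hg : ∀ x : ℝ, g x = F x) :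
    eigSum F A = eigFunctional A g := by
  simp only [eigFunctional_apply, eigSum_of_isHermitian hA, Complex.ofReal_re, hg]

lemma exists_onePoint_extension {F : ℂ → ℂ} {c : ℂ} (hF : Continuous fun x : ℝ => F x)
    (hFc : Tendsto (fun x : ℝ => F x) (cocompact ℝ) (𝓝 c)) :
    ∃ g : C(OnePoint ℝ, ℂ), ∀ x : ℝ, g x = F x :=
  ⟨OnePoint.continuousMapMk ⟨fun x : ℝ => F x, hF⟩ c
    (by rwa [coclosedCompact_eq_cocompact]), fun _ => rfl⟩

lemma multiToeplitz_congr_ae {L L' : Type*} {G H : ℝ → Matrix L L' ℂ}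
    (hGH : G =ᵐ[periodMeasure] H) (m : L → ℕ) (m' : L' → ℕ) :
    multiToeplitz G m m' = multiToeplitz H m m' := by
  ext p q
  simp only [multiToeplitz, of_apply, fCoeff_apply, expCoeff]
  congr 1
  exact integral_congr_ae (hGH.mono fun θ hθ => by simp only [hθ])

lemma exists_forall_isHermitian_ae_eq {L : Type*} {G : ℝ → Matrix L L ℂ}
    (hherm : ∀ᵐ θ ∂periodMeasure, (G θ).IsHermitian) :
    ∃ H : ℝ → Matrix L L ℂ, (∀ θ, (H θ).IsHermitian) ∧ G =ᵐ[periodMeasure] H := by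
  classical
  refine ⟨fun θ => if (G θ).IsHermitian then G θ else 0, fun θ => ?_,
    hherm.mono fun θ hθ => (if_pos hθ).symm⟩
  dsimp only
  split_ifs with hθ
  exacts [hθ, isHermitian_zero]

theorem integrable_eigSum (hG : ∀ a b, Integrable (fun θ => G θ a b) periodMeasure)
    (hherm : ∀ θ, (G θ).IsHermitian) {F : ℂ → ℂ} {c : ℂ} (hF : Continuous fun x : ℝ => F x)
    (hFc : Tendsto (fun x : ℝ => F x) (cocompact ℝ) (𝓝 c)) :
    Integrable (fun θ => eigSum F (G θ)) periodMeasure := by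
  obtain ⟨g, hg⟩ := exists_onePoint_extension hF hFc
  simpa only [eigSum_eq_eigFunctional (hherm _) hg] using integrable_eigFunctional hG hherm g

theorem tendsto_eigSum_multiToeplitz
    (hG : ∀ a b, Integrable (fun θ => G θ a b) periodMeasure)
    (hherm : ∀ᵐ θ ∂periodMeasure, (G θ).IsHermitian)
    (hN : Tendsto N 𝓁 atTop) (hm : ∀ a, Tendsto (fun n => m n a / N n) 𝓁 (𝓝 1))
    {F : ℂ → ℂ} {c : ℂ} (hF : Continuous fun x : ℝ => F x)
    (hFc : Tendsto (fun x : ℝ => F x) (cocompact ℝ) (𝓝 c)) :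
    Tendsto (fun n => (N n : ℂ)⁻¹ * eigSum F (multiToeplitz G (m n) (m n))) 𝓁
      (𝓝 ((2 * π : ℂ)⁻¹ * ∫ θ, eigSum F (G θ) ∂periodMeasure)) := by
  obtain ⟨H, hH, hGH⟩ := exists_forall_isHermitian_ae_eq hherm
  obtain ⟨g, hg⟩ := exists_onePoint_extension hF hFc
  have hH_int (a b) : Integrable (fun θ => H θ a b) periodMeasure :=
    (hG a b).congr (hGH.mono fun θ hθ => by simp only [hθ])
  have hlim : ∫ θ, eigSum F (G θ) ∂periodMeasure = ∫ θ, eigFunctional (H θ) g ∂periodMeasure :=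
    integral_congr_ae (hGH.mono fun θ hθ => by
      simp only [hθ, eigSum_eq_eigFunctional (hH θ) hg])
  simp only [hlim, multiToeplitz_congr_ae hGH,
    eigSum_eq_eigFunctional (isHermitian_multiToeplitz hH _) hg]
  exact tendsto_eigFunctional_multiToeplitz hH_int hH hN hm g

end EigenvalueDistribution

section SingularValues

variable {ι κ : Type*} [Fintype ι] [DecidableEq ι] [Fintype κ] [DecidableEq κ]

/-- The Hermitian dilation `[[0, A], [Aᴴ, 0]]` of a rectangular matrix, whose eigenvalues are the
singular values of `A`, their opposites, and zeros. -/
def hermitianDilation {ι κ : Type*} (A : Matrix ι κ ℂ) : Matrix (ι ⊕ κ) (ι ⊕ κ) ℂ :=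
  fromBlocks 0 A Aᴴ 0

lemma isHermitian_hermitianDilation {ι κ : Type*} (A : Matrix ι κ ℂ) :
    (hermitianDilation A).IsHermitian :=
  isHermitian_zero.fromBlocks rfl isHermitian_zero

lemma hermitianDilation_mul_self {ι κ : Type*} [Fintype ι] [Fintype κ] (A : Matrix ι κ ℂ) :
    hermitianDilation A * hermitianDilation A = fromBlocks (A * Aᴴ) 0 0 (Aᴴ * A) := by
  simp [hermitianDilation, fromBlocks_multiply]

lemma eigSum_fromBlocks_zero (F : ℂ → ℂ) (A : Matrix ι ι ℂ) (D : Matrix κ κ ℂ) :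
    eigSum F (fromBlocks A 0 0 D) = eigSum F A + eigSum F D := by
  rw [eigSum, charpoly_fromBlocks_zero₁₂,
    Polynomial.roots_mul (mul_ne_zero A.charpoly_monic.ne_zero D.charpoly_monic.ne_zero),
    Multiset.map_add, Multiset.sum_add, eigSum, eigSum]

lemma eigSum_mul_comm_add (F : ℂ → ℂ) (A : Matrix ι κ ℂ) (B : Matrix κ ι ℂ) :
    Fintype.card κ * F 0 + eigSum F (A * B) = Fintype.card ι * F 0 + eigSum F (B * A) := by
  have hroots (k : ℕ) {p : Polynomial ℂ} (hp : p.Monic) :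
      ((Polynomial.X ^ k * p).roots.map F).sum = k * F 0 + (p.roots.map F).sum := by
    rw [Polynomial.roots_mul (mul_ne_zero (pow_ne_zero _ Polynomial.X_ne_zero) hp.ne_zero),
      Polynomial.roots_X_pow, Multiset.map_add, Multiset.sum_add, Multiset.map_nsmul,
      Multiset.sum_nsmul, Multiset.map_singleton, Multiset.sum_singleton, nsmul_eq_mul]
  rw [eigSum, eigSum, ← hroots _ (charpoly_monic _), ← hroots _ (charpoly_monic _),
    charpoly_mul_comm']

lemma svSum_eq_eigSum {ι κ : Type*} [Fintype ι] [DecidableEq ι] [Fintype κ] (F : ℝ → ℂ)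
    (A : Matrix ι κ ℂ) :
    svSum F A = eigSum (fun w => F √w.re) (A * Aᴴ) -
      (Fintype.card ι - min (Fintype.card ι) (Fintype.card κ) : ℕ) * F 0 := by
  rw [svSum, eigSum_of_isHermitian (isHermitian_mul_conjTranspose_self A)]
  rfl

lemma eigSum_abs_hermitianDilation (F : ℝ → ℂ) (A : Matrix ι κ ℂ) :
    eigSum (fun w => F |w.re|) (hermitianDilation A) =
      eigSum (fun w => F √w.re) (A * Aᴴ) + eigSum (fun w => F √w.re) (Aᴴ * A) := by
  have hH := isHermitian_hermitianDilation A
  rw [← eigSum_fromBlocks_zero, ← hermitianDilation_mul_self, eigSum_mul_self hH,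
    eigSum_of_isHermitian hH, eigSum_of_isHermitian hH]
  simp [Real.sqrt_mul_self_eq_abs]

theorem svSum_eq_eigSum_hermitianDilation (F : ℝ → ℂ) (A : Matrix ι κ ℂ) :
    svSum F A = 2⁻¹ * (eigSum (fun w => F |w.re|) (hermitianDilation A) -
      (|(Fintype.card ι : ℝ) - Fintype.card κ| : ℝ) * F 0) := by
  have hcomm := eigSum_mul_comm_add (fun w => F √w.re) A Aᴴ
  simp only [Complex.zero_re, Real.sqrt_zero] at hcomm
  have habs : |(Fintype.card ι : ℝ) - Fintype.card κ| =
      Fintype.card ι + Fintype.card κ - 2 * (min (Fintype.card ι) (Fintype.card κ) : ℕ) := by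
    rw [← max_sub_min_eq_abs', Nat.cast_min, two_mul, ← sub_sub, ← min_add_max, add_sub_cancel_left]
  rw [svSum_eq_eigSum, eigSum_abs_hermitianDilation, Nat.cast_sub (min_le_left _ _), habs]
  simp only [Complex.ofReal_sub, Complex.ofReal_add, Complex.ofReal_mul, Complex.ofReal_natCast,
    Complex.ofReal_ofNat]
  linear_combination 2⁻¹ * hcomm

lemma multiToeplitz_zero {L L' : Type*} (m : L → ℕ) (m' : L' → ℕ) :
    multiToeplitz (fun _ => (0 : Matrix L L' ℂ)) m m' = 0 := by
  ext p q
  simp [multiToeplitz, fCoeff]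

lemma hermitianDilation_multiToeplitz {L L' : Type*} (G : ℝ → Matrix L L' ℂ) (m : L → ℕ)
    (m' : L' → ℕ) :
    hermitianDilation (multiToeplitz G m m') =
      (multiToeplitz (fun θ => hermitianDilation (G θ)) (Sum.elim m m') (Sum.elim m m')).reindex
        (Equiv.sumSigmaDistrib fun a => Fin (Sum.elim m m' a))
        (Equiv.sumSigmaDistrib fun a => Fin (Sum.elim m m' a)) := by
  rw [hermitianDilation, conjTranspose_multiToeplitz, ← multiToeplitz_zero m m,
    ← multiToeplitz_zero m' m']
  ext (p | p) (q | q) <;> rfl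

lemma eigSum_hermitianDilation_multiToeplitz {L L' : Type*} [Fintype L] [DecidableEq L]
    [Fintype L'] [DecidableEq L'] (F : ℂ → ℂ) (G : ℝ → Matrix L L' ℂ) (m : L → ℕ) (m' : L' → ℕ) :
    eigSum F (hermitianDilation (multiToeplitz G m m')) =
      eigSum F (multiToeplitz (fun θ => hermitianDilation (G θ)) (Sum.elim m m')
        (Sum.elim m m')) := by
  rw [hermitianDilation_multiToeplitz]
  exact eigSum_reindex _ F _

lemma tendsto_card_sigma_div {L α : Type*} [Fintype L] {𝓁 : Filter α} {m : α → L → ℕ}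
    {N : α → ℝ} (hm : ∀ a, Tendsto (fun n => m n a / N n) 𝓁 (𝓝 1)) :
    Tendsto (fun n => Fintype.card ((a : L) × Fin (m n a)) / N n) 𝓁 (𝓝 (Fintype.card L)) := by
  simpa [Finset.sum_div] using tendsto_finsetSum Finset.univ fun a _ => hm a

lemma integrable_hermitianDilation_apply {L L' : Type*} {G : ℝ → Matrix L L' ℂ}
    (hG : ∀ a b, Integrable (fun θ => G θ a b) periodMeasure) (a b : L ⊕ L') :
    Integrable (fun θ => hermitianDilation (G θ) a b) periodMeasure := by
  rcases a with a | a <;> rcases b with b | b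
  exacts [integrable_zero _ _ _, hG a b,
    (Complex.conjCLE : ℂ →L[ℝ] ℂ).integrable_comp (hG b a), integrable_zero _ _ _]

lemma mean_const (K : ℂ) : (2 * π : ℂ)⁻¹ * ∫ _, K ∂periodMeasure = K := by
  rw [integral_const, measureReal_periodMeasure_univ, Complex.real_smul]
  push_cast
  exact inv_mul_cancel_left₀ (by simp) K

lemma mean_svSum {L L' : Type*} [Fintype L] [DecidableEq L] [Fintype L'] [DecidableEq L']
    {G : ℝ → Matrix L L' ℂ}
    (hG : ∀ a b, Integrable (fun θ => G θ a b) periodMeasure) {F : ℝ → ℂ} {c : ℂ}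
    (hF : Continuous F) (hFc : Tendsto F atTop (𝓝 c)) :
    (2 * π : ℂ)⁻¹ * ∫ θ, svSum F (G θ) ∂periodMeasure =
      2⁻¹ * ((2 * π : ℂ)⁻¹ *
          ∫ θ, eigSum (fun w => F |w.re|) (hermitianDilation (G θ)) ∂periodMeasure -
        (|(Fintype.card L : ℝ) - Fintype.card L'| : ℝ) * F 0) := by
  have hint : Integrable (fun θ => eigSum (fun w => F |w.re|) (hermitianDilation (G θ)))
      periodMeasure :=
    integrable_eigSum (integrable_hermitianDilation_apply hG)
      (fun θ => isHermitian_hermitianDilation (G θ)) (by fun_prop)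
      (hFc.comp tendsto_norm_cocompact_atTop)
  simp only [svSum_eq_eigSum_hermitianDilation]
  rw [integral_const_mul, integral_sub hint (integrable_const _), mul_left_comm, mul_sub,
    mean_const]

theorem tendsto_svSum_multiToeplitz {L L' α : Type*} [Fintype L] [DecidableEq L] [Fintype L']
    {G : ℝ → Matrix L L' ℂ} {𝓁 : Filter α} {m : α → L → ℕ} {m' : α → L' → ℕ}
    {N : α → ℝ} (hG : ∀ a b, Integrable (fun θ => G θ a b) periodMeasure)
    (hN : Tendsto N 𝓁 atTop) (hm : ∀ a, Tendsto (fun n => m n a / N n) 𝓁 (𝓝 1))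
    (hm' : ∀ b, Tendsto (fun n => m' n b / N n) 𝓁 (𝓝 1)) {F : ℝ → ℂ} {c : ℂ}
    (hF : Continuous F) (hFc : Tendsto F atTop (𝓝 c)) :
    Tendsto (fun n => (N n : ℂ)⁻¹ * svSum F (multiToeplitz G (m n) (m' n))) 𝓁
      (𝓝 ((2 * π : ℂ)⁻¹ * ∫ θ, svSum F (G θ) ∂periodMeasure)) := by
  classical
  have heig := tendsto_eigSum_multiToeplitz (m := fun n => Sum.elim (m n) (m' n))
    (F := fun w => F |w.re|) (integrable_hermitianDilation_apply hG)
    (Eventually.of_forall fun θ => isHermitian_hermitianDilation (G θ)) hN (Sum.rec hm hm')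
    (by fun_prop) (hFc.comp tendsto_norm_cocompact_atTop)
  have hcard : Tendsto (fun n => |(Fintype.card ((a : L) × Fin (m n a)) : ℝ) / N n -
      Fintype.card ((b : L') × Fin (m' n b)) / N n|) 𝓁
      (𝓝 |(Fintype.card L : ℝ) - Fintype.card L'|) :=
    ((tendsto_card_sigma_div hm).sub (tendsto_card_sigma_div hm')).abs
  rw [mean_svSum hG hF hFc]
  refine ((heig.sub (((Complex.continuous_ofReal.tendsto _).comp hcard).mul_const (F 0))).const_mul
    2⁻¹).congr' ?_
  filter_upwards [hN.eventually_gt_atTop 0] with n hn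
  simp only [svSum_eq_eigSum_hermitianDilation, eigSum_hermitianDilation_multiToeplitz,
    Function.comp_apply]
  rw [← sub_div, abs_div, abs_of_pos hn]
  push_cast
  ring

lemma svSum_reindex {ι κ ι' κ' : Type*} [Fintype ι] [DecidableEq ι] [Fintype κ] [Fintype ι']
    [DecidableEq ι'] [Fintype κ'] (e : ι ≃ ι') (e' : κ ≃ κ') (F : ℝ → ℂ) (A : Matrix ι κ ℂ) :
    svSum F (A.reindex e e') = svSum F A := by
  have hmul : A.reindex e e' * (A.reindex e e')ᴴ = (A * Aᴴ).reindex e e := by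
    rw [conjTranspose_reindex, reindex_apply, reindex_apply, reindex_apply, submatrix_mul_equiv]
  rw [svSum_eq_eigSum, svSum_eq_eigSum, hmul, eigSum_reindex, Fintype.card_congr e,
    Fintype.card_congr e']

end SingularValues

section BlockMatrices

variable {ν s t : ℕ} {f : Fin ν → Fin ν → ℝ → Matrix (Fin s) (Fin t) ℂ} {nsz : ℕ → Fin ν → ℕ}

/-- Grouping the rows of `blockMat` by block row `i` and intra-block row `a`, the index of the
scalar Toeplitz block, instead of by block row and Toeplitz row. -/
def blockRowEquiv (s : ℕ) (ns : Fin ν → ℕ) :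
    ((p : Fin ν × Fin s) × Fin (ns p.1)) ≃ ((i : Fin ν) × (Fin (ns i) × Fin s)) where
  toFun P := ⟨P.1.1, P.2, P.1.2⟩
  invFun Q := ⟨(Q.1, Q.2.2), Q.2.1⟩

lemma blockMat_eq_reindex_multiToeplitz (f : Fin ν → Fin ν → ℝ → Matrix (Fin s) (Fin t) ℂ)
    (ns : Fin ν → ℕ) :
    blockMat ν s t f ns =
      (multiToeplitz (blockSymbol ν s t f) (fun p => ns p.1) (fun q => ns q.1)).reindex
        (blockRowEquiv s ns) (blockRowEquiv t ns) :=
  rfl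

lemma blockMat_submatrix_eq_reindex_multiToeplitz
    (f : Fin ν → Fin ν → ℝ → Matrix (Fin s) (Fin t) ℂ) (ns : Fin ν → ℕ) (hst : s = t) :
    (blockMat ν s t f ns).submatrix id (sigCast ν s t ns hst) =
      (multiToeplitz (fun θ => (blockSymbol ν s t f θ).submatrix id (Prod.map id (Fin.cast hst)))
        (fun p => ns p.1) (fun q => ns q.1)).reindex (blockRowEquiv s ns) (blockRowEquiv s ns) :=
  rfl

lemma card_blockRow (s : ℕ) (ns : Fin ν → ℕ) :
    Fintype.card ((i : Fin ν) × (Fin (ns i) × Fin s)) = (∑ i, ns i) * s := by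
  simp [Finset.sum_mul]

lemma integrable_blockSymbol_apply
    (hf : ∀ i j a b, IntervalIntegrable (fun θ => f i j θ a b) volume (-π) π)
    (p : Fin ν × Fin s) (q : Fin ν × Fin t) :
    Integrable (fun θ => blockSymbol ν s t f θ p q) periodMeasure :=
  (intervalIntegrable_iff_integrableOn_Icc_of_le (by linarith [Real.pi_pos])).mp
    (hf p.1 q.1 p.2 q.2)

lemma pos_of_tendsto_sum_atTop (htot : Tendsto (fun n => ∑ i, nsz n i) atTop atTop) : 0 < ν := by
  refine Nat.pos_of_ne_zero fun hν => ?_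
  subst hν
  exact not_tendsto_const_atTop 0 atTop (by simpa using htot)

lemma tendsto_meanSize_atTop (htot : Tendsto (fun n => ∑ i, nsz n i) atTop atTop) :
    Tendsto (fun n => ((∑ i, nsz n i : ℕ) : ℝ) / ν) atTop atTop :=
  (tendsto_natCast_atTop_atTop.comp htot).atTop_div_const
    (Nat.cast_pos.mpr (pos_of_tendsto_sum_atTop htot))

lemma tendsto_div_meanSize (hν : 0 < ν) {j : Fin ν}
    (hratio : Tendsto (fun n => (nsz n j : ℝ) / ((∑ i, nsz n i : ℕ) : ℝ)) atTop
      (𝓝 (1 / (ν : ℝ)))) :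
    Tendsto (fun n => (nsz n j : ℝ) / (((∑ i, nsz n i : ℕ) : ℝ) / ν)) atTop (𝓝 1) := by
  have := hratio.mul_const (ν : ℝ)
  rw [one_div, inv_mul_cancel₀ (by positivity)] at this
  simpa only [div_div_eq_mul_div, div_mul_eq_mul_div] using this

lemma inv_mul_eq_inv_meanSize_mul (hν : 0 < ν) (S r : ℕ) (x : ℂ) :
    ((S * r : ℕ) : ℂ)⁻¹ * x = ((ν * r : ℕ) : ℂ)⁻¹ * (((S / ν : ℝ) : ℂ)⁻¹ * x) := by
  have hν' : (ν : ℂ) ≠ 0 := by exact_mod_cast hν.ne'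
  push_cast
  field_simp

lemma inv_volume_Icc_mul_integral (K : ℂ) (g : ℝ → ℂ) :
    ((volume (Set.Icc (-π) π)).toReal : ℂ)⁻¹ * ∫ θ in Set.Icc (-π) π, K * g θ =
      K * ((2 * π : ℂ)⁻¹ * ∫ θ, g θ ∂periodMeasure) := by
  have hvol : ((volume (Set.Icc (-π) π)).toReal : ℂ) = 2 * π := by
    rw [← measureReal_def, ← measureReal_restrict_apply_univ, measureReal_periodMeasure_univ]
    push_cast
    rfl
  rw [hvol, integral_const_mul, mul_left_comm]

theorem distributedSV_blockMat
    (hf : ∀ i j a b, IntervalIntegrable (fun θ => f i j θ a b) volume (-π) π)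
    (htot : Tendsto (fun n => ∑ i, nsz n i) atTop atTop)
    (hratio : ∀ j, Tendsto (fun n => (nsz n j : ℝ) / ((∑ i, nsz n i : ℕ) : ℝ))
      atTop (𝓝 (1 / (ν : ℝ)))) :
    DistributedSV (Set.Icc (-π) π) (blockSymbol ν s t f)
      (fun n => blockMat ν s t f (nsz n)) := by
  intro F hF hFc
  have hν := pos_of_tendsto_sum_atTop htot
  have hm (r : ℕ) (p : Fin ν × Fin r) := tendsto_div_meanSize hν (hratio p.1)
  have hlim := (tendsto_svSum_multiToeplitz (integrable_blockSymbol_apply hf)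
    (tendsto_meanSize_atTop htot) (hm s) (hm t) hF
    (hFc.is_zero_at_infty.mono_left atTop_le_cocompact)).const_mul
      (((ν * min s t : ℕ) : ℂ)⁻¹)
  simp only [inv_volume_Icc_mul_integral, card_blockRow, Fintype.card_prod, Fintype.card_fin,
    Nat.mul_min_mul_left, blockMat_eq_reindex_multiToeplitz, svSum_reindex]
  exact hlim.congr fun n => (inv_mul_eq_inv_meanSize_mul hν _ _ _).symm

theorem distributedEig_blockMat
    (hf : ∀ i j a b, IntervalIntegrable (fun θ => f i j θ a b) volume (-π) π)
    (htot : Tendsto (fun n => ∑ i, nsz n i) atTop atTop)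
    (hratio : ∀ j, Tendsto (fun n => (nsz n j : ℝ) / ((∑ i, nsz n i : ℕ) : ℝ))
      atTop (𝓝 (1 / (ν : ℝ))))
    (hst : s = t)
    (hherm : ∀ᵐ θ ∂volume.restrict (Set.Icc (-π) π),
      ((blockSymbol ν s t f θ).submatrix id (Prod.map id (Fin.cast hst))).IsHermitian) :
    DistributedEig (Set.Icc (-π) π)
      (fun θ => (blockSymbol ν s t f θ).submatrix id (Prod.map id (Fin.cast hst)))
      (fun n => (blockMat ν s t f (nsz n)).submatrix id (sigCast ν s t (nsz n) hst)) := by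
  intro F hF hFc
  have hν := pos_of_tendsto_sum_atTop htot
  have hF_zero : Tendsto (fun x : ℝ => F x) (cocompact ℝ) (𝓝 0) :=
    hFc.is_zero_at_infty.comp Complex.isometry_ofReal.isClosedEmbedding.tendsto_cocompact
  have hlim := (tendsto_eigSum_multiToeplitz
    (fun p q => integrable_blockSymbol_apply hf p (Prod.map id (Fin.cast hst) q)) hherm
    (tendsto_meanSize_atTop htot) (fun p => tendsto_div_meanSize hν (hratio p.1))
    (by fun_prop) hF_zero).const_mul (((ν * s : ℕ) : ℂ)⁻¹)
  simp only [inv_volume_Icc_mul_integral, card_blockRow, Fintype.card_prod, Fintype.card_fin,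
    blockMat_submatrix_eq_reindex_multiToeplitz, eigSum_reindex]
  exact hlim.congr fun n => (inv_mul_eq_inv_meanSize_mul hν _ _ _).symm

end BlockMatrices

theorem almost_equal_blocks_basic_general
    (ν s t : ℕ) (_hs : 0 < s) (_ht : 0 < t)
    (f : Fin ν → Fin ν → ℝ → Matrix (Fin s) (Fin t) ℂ)
    (hf : ∀ i j a b, IntervalIntegrable (fun θ => f i j θ a b) volume (-π) π)
    (nsz : ℕ → Fin ν → ℕ)
    (htot : Tendsto (fun n => ∑ i, nsz n i) atTop atTop)
    (hratio : ∀ j, Tendsto (fun n => (nsz n j : ℝ) / ((∑ i, nsz n i : ℕ) : ℝ))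
      atTop (𝓝 (1 / (ν : ℝ)))) :
    DistributedSV (Set.Icc (-π) π) (blockSymbol ν s t f)
      (fun n => blockMat ν s t f (nsz n)) ∧
    (∀ hst : s = t,
      (∀ᵐ θ ∂volume.restrict (Set.Icc (-π) π),
        ((blockSymbol ν s t f θ).submatrix id
          (Prod.map id (Fin.cast hst))).IsHermitian) →
      DistributedEig (Set.Icc (-π) π)
        (fun θ => (blockSymbol ν s t f θ).submatrix id (Prod.map id (Fin.cast hst)))
        (fun n => (blockMat ν s t f (nsz n)).submatrix id
          (sigCast ν s t (nsz n) hst))) :=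
  ⟨distributedSV_blockMat hf htot hratio, distributedEig_blockMat hf htot hratio⟩

/-- almost equal block sizes: if `n_j/n → 1/ν` for all `j` (i.e.
`n_j = n/ν + o(n)`) with `n = n_1 + ⋯ + n_ν → ∞`, then `{A_n}_n ∼_σ F` with
`F = (f_{i,j})_{i,j=1}^ν`, and `{A_n}_n ∼_λ F` when `F` is Hermitian-valued. -/
theorem almost_equal_blocks_basic
    (ν s t : ℕ) (hν : 2 ≤ ν) (hs : 0 < s) (ht : 0 < t)
    (f : Fin ν → Fin ν → ℝ → Matrix (Fin s) (Fin t) ℂ)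
    (hf : ∀ i j a b, IntervalIntegrable (fun θ => f i j θ a b) volume (-π) π)
    (nsz : ℕ → Fin ν → ℕ)
    (htot : Tendsto (fun n => ∑ i, nsz n i) atTop atTop)
    (hratio : ∀ j, Tendsto (fun n => (nsz n j : ℝ) / ((∑ i, nsz n i : ℕ) : ℝ))
      atTop (𝓝 (1 / (ν : ℝ)))) :
    DistributedSV (Set.Icc (-π) π) (blockSymbol ν s t f)
      (fun n => blockMat ν s t f (nsz n)) ∧
    (∀ hst : s = t,
      (∀ θ ∈ Set.Icc (-π) π,
        ((blockSymbol ν s t f θ).submatrix id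
          (Prod.map id (Fin.cast hst))).IsHermitian) →
      DistributedEig (Set.Icc (-π) π)
        (fun θ => (blockSymbol ν s t f θ).submatrix id (Prod.map id (Fin.cast hst)))
        (fun n => (blockMat ν s t f (nsz n)).submatrix id
          (sigCast ν s t (nsz n) hst))) := by
  obtain ⟨hsv, heig⟩ := almost_equal_blocks_basic_general ν s t hs ht f hf nsz htot hratio
  exact ⟨hsv, fun hst hherm => heig hst (ae_restrict_of_forall_mem measurableSet_Icc hherm)⟩

end
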